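/- arXiv:1904.09928 — 4 statements merged into one kernel-verified Lean document; each statement's English description precedes it below -/
import Mathlib

section
/- Let Φ₁ and Φ₂ be N-functions. Then for every constant C > 0 there exists a smooth compactly supported function f : ℝ → ℝ such that for every z ∈ ℝ one has ‖f − z‖_{(Φ₁)} > C · ‖f'‖_{(Φ₂)}, where norms are Luxemburg norms with respect to Lebesgue measure on ℝ. In other words, there is no constant C for which the Poincaré–Sobolev–Orlicz inequality inf_{z∈ℝ} ‖f − z‖_{(Φ₁)} ≤ C ‖f'‖_{(Φ₂)} holds for all such f. (Consequently the first L_{Φ₁,Φ₂}-torsion of ℝ is nonzero and H¹_{Φ₁,Φ₂}(ℝ) is not separated.) -/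
open MeasureTheory ENNReal

/-- An N-function: even, convex, vanishing exactly at `0`, with `Φ(x)/x → 0` as `x → 0⁺`
and `Φ(x)/x → ∞` as `x → ∞`. -/
structure IsNFunction (Φ : ℝ → ℝ) : Prop where
  nonneg : ∀ x, 0 ≤ Φ x
  even : ∀ x, Φ (-x) = Φ x
  convex : ConvexOn ℝ Set.univ Φ
  zero_iff : ∀ x, Φ x = 0 ↔ x = 0
  tendsto_zero : Filter.Tendsto (fun x => Φ x / x) (nhdsWithin 0 (Set.Ioi 0)) (nhds 0)
  tendsto_atTop : Filter.Tendsto (fun x => Φ x / x) Filter.atTop Filter.atTop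

/-- The Luxemburg (gauge) norm `‖f‖_{(Φ)} = inf {K > 0 : ∫ Φ(f/K) dμ ≤ 1}`, with value `∞`
when no such `K` exists. -/
noncomputable def luxNorm {α : Type*} [MeasurableSpace α] (μ : Measure α)
    (Φ : ℝ → ℝ) (f : α → ℝ) : ℝ≥0∞ :=
  sInf {K : ℝ≥0∞ | ∃ k : ℝ, 0 < k ∧ K = ENNReal.ofReal k ∧
    ∫⁻ x, ENNReal.ofReal (Φ (f x / k)) ∂μ ≤ 1}

/-!
Let `φ ≠ 0` be a test function and stretch it to `φ_r x = φ (r x)` with `r → 0⁺`. The derivative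
of `φ_r` has size `O(r)` on a set of measure `O(r⁻¹)`, so `‖φ_r'‖_{(Φ₂)}` stays bounded, because
`Φ₂ t = O(t)` as `t → 0⁺`. On the other hand `|φ_r| ≥ c > 0` on a set of measure comparable to
`r⁻¹`, and `φ_r = 0` on a set of infinite measure. For every `z`, one of these two sets satisfies
`|φ_r - z| ≥ c / 2` throughout. Since `Φ₁` is positive away from `0`, this forces
`‖φ_r - z‖_{(Φ₁)} → ∞` uniformly in `z`.
-/

open Filter Topology Asymptotics Set

section LuxNormBounds

variable {α : Type*} [MeasurableSpace α] {μ : Measure α} {Φ : ℝ → ℝ} {f : α → ℝ}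

theorem luxNorm_le_ofReal_of_abs_le {s : Set α} {a k : ℝ}
    (hΦ_mono : ∀ ⦃x y⦄, |x| ≤ |y| → Φ x ≤ Φ y) (hΦ_zero : Φ 0 = 0) (hk : 0 < k)
    (hf_le : ∀ x, |f x| ≤ k * a) (hf_zero : ∀ x ∉ s, f x = 0)
    (hs : ENNReal.ofReal (Φ a) * μ s ≤ 1) :
    luxNorm μ Φ f ≤ ENNReal.ofReal k := by
  refine sInf_le ⟨k, hk, rfl, ?_⟩
  have h_le (x : α) :
      ENNReal.ofReal (Φ (f x / k)) ≤ s.indicator (fun _ => ENNReal.ofReal (Φ a)) x := by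
    by_cases hx : x ∈ s
    · rw [indicator_of_mem hx]
      refine ENNReal.ofReal_le_ofReal (hΦ_mono ?_)
      rw [abs_div, abs_of_pos hk, div_le_iff₀' hk]
      exact (hf_le x).trans (by gcongr; exact le_abs_self a)
    · simp [hf_zero x hx, hΦ_zero]
  calc ∫⁻ x, ENNReal.ofReal (Φ (f x / k)) ∂μ
      ≤ ∫⁻ x, s.indicator (fun _ => ENNReal.ofReal (Φ a)) x ∂μ := lintegral_mono h_le
    _ ≤ ENNReal.ofReal (Φ a) * μ s := lintegral_indicator_const_le s _
    _ ≤ 1 := hs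

theorem ofReal_div_le_luxNorm_of_le_abs {s : Set α} {a b : ℝ}
    (hΦ_mono : ∀ ⦃x y⦄, |x| ≤ |y| → Φ x ≤ Φ y) (ha : 0 < a) (hs_meas : MeasurableSet s)
    (hf_ge : ∀ x ∈ s, b ≤ |f x|) (hs : 1 < ENNReal.ofReal (Φ a) * μ s) :
    ENNReal.ofReal (b / a) ≤ luxNorm μ Φ f := by
  refine le_sInf ?_
  rintro _ ⟨k, hk, rfl, hk_int⟩
  refine ENNReal.ofReal_le_ofReal (le_of_not_gt fun hkb => hk_int.not_gt ?_)
  have h_ge (x : α) (hx : x ∈ s) : Φ a ≤ Φ (f x / k) := by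
    apply hΦ_mono
    rw [abs_of_pos ha, abs_div, abs_of_pos hk, le_div_iff₀' hk]
    exact ((lt_div_iff₀ ha).1 hkb).le.trans (hf_ge x hx)
  calc 1 < ENNReal.ofReal (Φ a) * μ s := hs
    _ = ∫⁻ _ in s, ENNReal.ofReal (Φ a) ∂μ := (setLIntegral_const s _).symm
    _ ≤ ∫⁻ x in s, ENNReal.ofReal (Φ (f x / k)) ∂μ :=
        setLIntegral_mono' hs_meas fun x hx => ENNReal.ofReal_le_ofReal (h_ge x hx)
    _ ≤ ∫⁻ x, ENNReal.ofReal (Φ (f x / k)) ∂μ := setLIntegral_le_lintegral s _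

theorem ofReal_div_le_luxNorm_sub_const {s t : Set α} {a c : ℝ}
    (hΦ_mono : ∀ ⦃x y⦄, |x| ≤ |y| → Φ x ≤ Φ y) (ha : 0 < a)
    (hs_meas : MeasurableSet s) (ht_meas : MeasurableSet t)
    (hf_ge : ∀ x ∈ s, c ≤ |f x|) (hf_zero : ∀ x ∈ t, f x = 0)
    (hs : 1 < ENNReal.ofReal (Φ a) * μ s) (ht : 1 < ENNReal.ofReal (Φ a) * μ t) (z : ℝ) :
    ENNReal.ofReal (c / 2 / a) ≤ luxNorm μ Φ (fun x => f x - z) := by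
  rcases le_total (c / 2) |z| with hz | hz
  · refine ofReal_div_le_luxNorm_of_le_abs hΦ_mono ha ht_meas (fun x hx => ?_) ht
    simpa [hf_zero x hx] using hz
  · refine ofReal_div_le_luxNorm_of_le_abs hΦ_mono ha hs_meas (fun x hx => ?_) hs
    linarith [hf_ge x hx, abs_sub_abs_le_abs_sub (f x) z]

end LuxNormBounds

section Stretching

variable {E : Type*} [NormedAddCommGroup E] [NormedSpace ℝ E] [FiniteDimensional ℝ E]
  [Nontrivial E] [MeasurableSpace E] [BorelSpace E] {μ : Measure E} [μ.IsAddHaarMeasure]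

theorem tendsto_measure_preimage_smul_nhdsGT_zero {s : Set E} (hs : μ s ≠ 0) :
    Tendsto (fun r : ℝ => μ ((r • ·) ⁻¹' s)) (𝓝[>] 0) (𝓝 ∞) := by
  have h_pow : Tendsto (fun r : ℝ => (r⁻¹) ^ Module.finrank ℝ E) (𝓝[>] 0) atTop :=
    (tendsto_pow_atTop Module.finrank_pos.ne').comp tendsto_inv_nhdsGT_zero
  have h_mul := ENNReal.Tendsto.mul_const (b := μ s)
    (ENNReal.tendsto_ofReal_nhds_top.2 h_pow) (Or.inl ENNReal.top_ne_zero)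
  rw [ENNReal.top_mul hs] at h_mul
  refine h_mul.congr' ?_
  filter_upwards [self_mem_nhdsWithin] with r (hr : 0 < r)
  rw [Measure.addHaar_preimage_smul μ hr.ne', abs_of_pos (by positivity), inv_pow]

theorem eventually_le_luxNorm_comp_smul_sub_const {Φ : ℝ → ℝ} {φ : E → ℝ} {B : ℝ}
    (hΦ_mono : ∀ ⦃x y⦄, |x| ≤ |y| → Φ x ≤ Φ y) (hΦ_pos : ∀ x, 0 < x → 0 < Φ x)
    (hφ : Continuous φ) (hφ_supp : HasCompactSupport φ) (hφ_ne : φ ≠ 0) (hB : 0 < B) :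
    ∀ᶠ r in 𝓝[>] (0 : ℝ), ∀ z : ℝ,
      ENNReal.ofReal B ≤ luxNorm μ Φ (fun x => φ (r • x) - z) := by
  obtain ⟨x₀, hx₀⟩ := Function.ne_iff.1 hφ_ne
  obtain ⟨c, hc, hcx₀⟩ : ∃ c, 0 < c ∧ c < |φ x₀| := exists_between (abs_pos.2 hx₀)
  have hU_open : IsOpen {x | c < |φ x|} := isOpen_lt continuous_const hφ.abs
  set a : ℝ := c / 2 / B with ha_def
  have ha : 0 < a := by positivity
  have hΦa : ENNReal.ofReal (Φ a) ≠ 0 := (ENNReal.ofReal_pos.2 (hΦ_pos a ha)).ne'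
  have h_large : Tendsto (fun r : ℝ => ENNReal.ofReal (Φ a) * μ ((r • ·) ⁻¹' {x | c < |φ x|}))
      (𝓝[>] 0) (𝓝 ∞) := by
    rw [← ENNReal.mul_top hΦa]
    exact ENNReal.Tendsto.const_mul
      (tendsto_measure_preimage_smul_nhdsGT_zero (hU_open.measure_pos μ ⟨x₀, hcx₀⟩).ne')
      (Or.inl ENNReal.top_ne_zero)
  filter_upwards [h_large.eventually_const_lt ENNReal.one_lt_top, self_mem_nhdsWithin]
    with r hr_large (hr : 0 < r) z
  let φr : E → ℝ := fun x => φ (r • x)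
  have hK : IsCompact (tsupport φr) := hφ_supp.comp_smul hr.ne'
  have hK_compl : μ (tsupport φr)ᶜ = ∞ := by
    have := NormedSpace.noncompactSpace ℝ E
    rw [measure_compl hK.measurableSet hK.measure_ne_top, measure_univ_of_isAddLeftInvariant,
      ENNReal.top_sub hK.measure_ne_top]
  have hK_large : 1 < ENNReal.ofReal (Φ a) * μ (tsupport φr)ᶜ := by
    rw [hK_compl, ENNReal.mul_top hΦa]
    exact ENNReal.one_lt_top
  have hB_eq : B = c / 2 / a := by rw [ha_def]; field_simp
  rw [hB_eq]
  exact ofReal_div_le_luxNorm_sub_const (f := φr) hΦ_mono ha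
    (hU_open.preimage (continuous_const_smul r)).measurableSet hK.measurableSet.compl
    (fun x hx => le_of_lt hx) (fun x => image_eq_zero_of_notMem_tsupport) hr_large hK_large z

end Stretching

theorem exists_eventually_ofReal_mul_volume_preimage_smul_le_one {Φ : ℝ → ℝ} {s : Set ℝ}
    (hΦ_bigO : Φ =O[𝓝[>] 0] id) (hs : volume s ≠ ∞) :
    ∃ c > 0, ∀ᶠ r in 𝓝[>] (0 : ℝ),
      ENNReal.ofReal (Φ (c * r)) * volume ((r • ·) ⁻¹' s) ≤ 1 := by
  obtain ⟨L, hL, hΦ_le⟩ := hΦ_bigO.exists_pos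
  set V : ℝ := volume.real s
  have hV : 0 ≤ V := measureReal_nonneg
  have hc : 0 < (L * (V + 1))⁻¹ := by positivity
  refine ⟨(L * (V + 1))⁻¹, hc, ?_⟩
  filter_upwards [eventually_nhdsGT_zero_mul_left hc hΦ_le.bound,
    self_mem_nhdsWithin] with r hΦr (hr : 0 < r)
  have h_le : Φ ((L * (V + 1))⁻¹ * r) ≤ r / (V + 1) := by
    refine (le_abs_self _).trans (hΦr.trans_eq ?_)
    rw [id, Real.norm_of_nonneg (by positivity)]
    field_simp
  have h_volume : volume ((r • ·) ⁻¹' s) = ENNReal.ofReal (r⁻¹ * V) := by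
    rw [Measure.addHaar_preimage_smul volume hr.ne', Module.finrank_self, pow_one,
      abs_of_pos (inv_pos.2 hr), ENNReal.ofReal_mul (by positivity), ofReal_measureReal hs]
  calc ENNReal.ofReal (Φ ((L * (V + 1))⁻¹ * r)) * volume ((r • ·) ⁻¹' s)
      ≤ ENNReal.ofReal (r / (V + 1)) * ENNReal.ofReal (r⁻¹ * V) := by
        rw [h_volume]; gcongr
    _ = ENNReal.ofReal (V / (V + 1)) := by
        rw [← ENNReal.ofReal_mul (by positivity)]
        congr 1
        field_simp
    _ ≤ 1 := ENNReal.ofReal_le_one.2 (div_le_one_of_le₀ (by linarith) (by positivity))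

theorem exists_eventually_luxNorm_deriv_comp_smul_le {Φ φ : ℝ → ℝ}
    (hΦ_mono : ∀ ⦃x y⦄, |x| ≤ |y| → Φ x ≤ Φ y) (hΦ_zero : Φ 0 = 0)
    (hΦ_bigO : Φ =O[𝓝[>] 0] id) (hφ : ContDiff ℝ 1 φ) (hφ_supp : HasCompactSupport φ) :
    ∃ k : ℝ, 0 < k ∧ ∀ᶠ r in 𝓝[>] (0 : ℝ),
      luxNorm volume Φ (deriv fun x => φ (r • x)) ≤ ENNReal.ofReal k := by
  obtain ⟨c, hc, h_small⟩ := exists_eventually_ofReal_mul_volume_preimage_smul_le_one hΦ_bigO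
    hφ_supp.isCompact.measure_ne_top
  obtain ⟨M, hM⟩ := (hφ.continuous_deriv le_rfl).bounded_above_of_compact_support hφ_supp.deriv
  have hk : 0 < (|M| + 1) / c := by positivity
  refine ⟨(|M| + 1) / c, hk, ?_⟩
  filter_upwards [h_small, self_mem_nhdsWithin] with r hr_small (hr : 0 < r)
  have h_deriv (x : ℝ) : deriv (fun x => φ (r • x)) x = r * deriv φ (r * x) :=
    deriv_comp_mul_left r φ x
  refine luxNorm_le_ofReal_of_abs_le hΦ_mono hΦ_zero hk (fun x => ?_) (fun x hx => ?_) hr_small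
  · calc |deriv (fun x => φ (r • x)) x| = r * |deriv φ (r * x)| := by
          rw [h_deriv, abs_mul, abs_of_pos hr]
      _ ≤ r * (|M| + 1) := by
          gcongr
          exact (hM _).trans (by linarith [le_abs_self M])
      _ = (|M| + 1) / c * (c * r) := by field_simp
  · have h_zero : deriv φ (r * x) = 0 := by
      by_contra h_ne
      exact hx (support_deriv_subset h_ne)
    rw [h_deriv, h_zero, mul_zero]

theorem no_poincare_sobolev_orlicz_on_real_line_general {Φ₁ Φ₂ : ℝ → ℝ}
    (h₁_mono : ∀ ⦃x y⦄, |x| ≤ |y| → Φ₁ x ≤ Φ₁ y) (h₁_zero : ∀ x, Φ₁ x = 0 ↔ x = 0)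
    (h₂_mono : ∀ ⦃x y⦄, |x| ≤ |y| → Φ₂ x ≤ Φ₂ y) (h₂_zero : Φ₂ 0 = 0)
    (h₂_bigO : Φ₂ =O[𝓝[>] 0] id) :
    ∀ C : ℝ, 0 < C → ∃ f : ℝ → ℝ, ContDiff ℝ (⊤ : ℕ∞) f ∧ HasCompactSupport f ∧
      ∀ z : ℝ, ENNReal.ofReal C * luxNorm volume Φ₂ (deriv f) <
        luxNorm volume Φ₁ (fun x => f x - z) := by
  intro C hC
  let φ : ContDiffBump (0 : ℝ) := default
  have hφ_ne : (φ : ℝ → ℝ) ≠ 0 :=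
    Function.ne_iff.2 ⟨0, (φ.pos_of_mem_ball (Metric.mem_ball_self φ.rOut_pos)).ne'⟩
  have h₁_pos (x : ℝ) (hx : 0 < x) : 0 < Φ₁ x := by
    have h_nonneg : Φ₁ 0 ≤ Φ₁ x := h₁_mono (by simp)
    rw [(h₁_zero 0).2 rfl] at h_nonneg
    exact h_nonneg.lt_of_ne' ((h₁_zero x).not.2 hx.ne')
  obtain ⟨k, hk, h_upper⟩ := exists_eventually_luxNorm_deriv_comp_smul_le h₂_mono h₂_zero h₂_bigO
    φ.contDiff φ.hasCompactSupport
  have h_lower := eventually_le_luxNorm_comp_smul_sub_const (μ := volume) (B := C * k + 1)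
    h₁_mono h₁_pos φ.continuous φ.hasCompactSupport hφ_ne (by positivity)
  obtain ⟨r, hr_upper, hr_lower, hr : 0 < r⟩ :=
    (h_upper.and (h_lower.and self_mem_nhdsWithin)).exists
  refine ⟨fun x => φ (r • x), φ.contDiff.comp (contDiff_const_smul r),
    φ.hasCompactSupport.comp_smul hr.ne', fun z => ?_⟩
  calc ENNReal.ofReal C * luxNorm volume Φ₂ (deriv fun x => φ (r • x))
      ≤ ENNReal.ofReal C * ENNReal.ofReal k := by gcongr
    _ = ENNReal.ofReal (C * k) := (ENNReal.ofReal_mul hC.le).symm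
    _ < ENNReal.ofReal (C * k + 1) :=
        (ENNReal.ofReal_lt_ofReal_iff (by positivity)).2 (lt_add_one _)
    _ ≤ luxNorm volume Φ₁ (fun x => φ (r • x) - z) := hr_lower z

namespace IsNFunction

variable {Φ : ℝ → ℝ}

theorem apply_le_apply_of_abs_le (hΦ : IsNFunction Φ) ⦃x y : ℝ⦄ (hxy : |x| ≤ |y|) :
    Φ x ≤ Φ y := by
  have h_max := hΦ.convex.le_max_of_mem_Icc (mem_univ (-|y|)) (mem_univ |y|) (abs_le.1 hxy)
  rw [hΦ.even, max_self] at h_max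
  rcases abs_choice y with hy | hy <;> simpa only [hy, hΦ.even] using h_max

theorem isBigO_id_nhdsGT_zero (hΦ : IsNFunction Φ) : Φ =O[𝓝[>] 0] id :=
  isBigO_of_div_tendsto_nhds
    (eventually_mem_nhdsWithin.mono fun _ hx h => absurd h (ne_of_gt hx)) 0 hΦ.tendsto_zero

end IsNFunction

/-- The Poincaré–Sobolev–Orlicz inequality fails on `ℝ`: for any N-functions `Φ₁, Φ₂` and
any constant `C > 0` there is a smooth compactly supported `f : ℝ → ℝ` such that
`‖f - z‖_{(Φ₁)} > C ‖f'‖_{(Φ₂)}` for every `z ∈ ℝ`. -/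
theorem no_poincare_sobolev_orlicz_on_real_line
    {Φ₁ Φ₂ : ℝ → ℝ} (h1 : IsNFunction Φ₁) (h2 : IsNFunction Φ₂) :
    ∀ C : ℝ, 0 < C → ∃ f : ℝ → ℝ, ContDiff ℝ (⊤ : ℕ∞) f ∧ HasCompactSupport f ∧
      ∀ z : ℝ, ENNReal.ofReal C * luxNorm volume Φ₂ (deriv f) <
        luxNorm volume Φ₁ (fun x => f x - z) :=
  no_poincare_sobolev_orlicz_on_real_line_general h1.apply_le_apply_of_abs_le h1.zero_iff
    h2.apply_le_apply_of_abs_le ((h2.zero_iff 0).2 rfl) h2.isBigO_id_nhdsGT_zero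
end

section
/- Let Φ₁ and Φ₂ be N-functions. Then for every constant C > 0 there exists a smooth function f : ℝ → ℝ whose support is a compact subset of (0, ∞) such that for every z ∈ ℝ one has ‖f − z‖_{(Φ₁),(0,∞)} > C · ‖f'‖_{(Φ₂),(0,∞)}, where the Luxemburg norms are taken with respect to Lebesgue measure on the half-line (0, ∞). (Thus the Poincaré–Sobolev–Orlicz inequality also fails on the half-line ℝ₊.) -/
open MeasureTheory ENNReal

open Filter Topology

/-!
Take for `f` a smooth bump equal to `1` on an interval of length `2 * L` and supported in the
concentric one of length `4 * L`. Its derivative has size `O(1 / L)` on a set of measure `4 * L`,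
so the modular of `f'` is at most `4 * L * Φ₂ (O(1 / L))`, which tends to `0` because `Φ₂ x = o(x)`
at `0`; hence `‖f'‖ ≤ 1` for large `L`. On the other hand `f = 1` on a set of measure `2 * L`, so
`‖f‖` exceeds any given constant for large `L`, while `f - z` with `z ≠ 0` equals `-z` on a set of
infinite measure and has infinite norm.
-/

theorem monotoneOn_Ici_of_convexOn_of_even {Φ : ℝ → ℝ} (hconv : ConvexOn ℝ Set.univ Φ)
    (heven : Function.Even Φ) : MonotoneOn Φ (Set.Ici 0) := by
  intro x hx y _ hxy
  have hx' : x ∈ Set.Icc (-y) y := ⟨(neg_nonpos.2 (le_trans hx hxy)).trans hx, hxy⟩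
  simpa [heven y] using
    hconv.le_max_of_mem_Icc (Set.mem_univ (-y)) (Set.mem_univ y) hx'

namespace IsNFunction

variable {Φ : ℝ → ℝ}

theorem monotoneOn_Ici (h : IsNFunction Φ) : MonotoneOn Φ (Set.Ici 0) :=
  monotoneOn_Ici_of_convexOn_of_even h.convex h.even

theorem apply_zero (h : IsNFunction Φ) : Φ 0 = 0 :=
  (h.zero_iff 0).2 rfl

end IsNFunction

theorem tendsto_mul_apply_div_atTop {Φ : ℝ → ℝ}
    (hΦ : Tendsto (fun x => Φ x / x) (𝓝[>] 0) (𝓝 0)) {b : ℝ} (hb : 0 < b) :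
    Tendsto (fun L => L * Φ (b / L)) atTop (𝓝 0) := by
  have hdiv : Tendsto (fun L : ℝ => b / L) atTop (𝓝[>] 0) :=
    tendsto_nhdsWithin_iff.2 ⟨tendsto_const_nhds.div_atTop tendsto_id,
      (eventually_gt_atTop 0).mono fun L hL => div_pos hb hL⟩
  have hlim : Tendsto (fun L => b * (Φ (b / L) / (b / L))) atTop (𝓝 (b * 0)) :=
    (hΦ.comp hdiv).const_mul b
  rw [mul_zero] at hlim
  refine hlim.congr' ((eventually_gt_atTop 0).mono fun L hL => ?_)
  field_simp

section LuxemburgNorm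

variable {α : Type*} [MeasurableSpace α] {μ : Measure α} {Φ : ℝ → ℝ} {f : α → ℝ} {t : Set α}

theorem luxNorm_le_ofReal_of_abs_le_s5 (heven : Function.Even Φ) (hmono : MonotoneOn Φ (Set.Ici 0))
    (hzero : Φ 0 = 0) {b k : ℝ} (hk : 0 < k) (hsupp : Function.support f ⊆ t)
    (hb : ∀ x, |f x| ≤ b) (hle : ENNReal.ofReal (Φ (b / k)) * μ t ≤ 1) :
    luxNorm μ Φ f ≤ ENNReal.ofReal k := by
  refine sInf_le ⟨k, hk, rfl, le_trans ?_ hle⟩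
  refine (lintegral_mono fun x => ?_).trans (lintegral_indicator_const_le t _)
  by_cases hx : x ∈ t
  · have habs : Φ (f x / k) = Φ (|f x| / k) := by
      rcases abs_choice (f x) with h | h <;> simp only [h, neg_div, heven _]
    rw [Set.indicator_of_mem hx, habs]
    have hquot : |f x| / k ≤ b / k := div_le_div_of_nonneg_right (hb x) hk.le
    have hnonneg : 0 ≤ |f x| / k := by positivity
    exact ENNReal.ofReal_le_ofReal (hmono hnonneg (hnonneg.trans hquot) hquot)
  · have hfx : f x = 0 := Function.notMem_support.1 (mt (@hsupp x) hx)
    simp [hfx, hzero]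

theorem ofReal_mul_measure_le_lintegral (ht : MeasurableSet t) {g : α → ℝ} {c : ℝ}
    (hc : ∀ x ∈ t, c ≤ g x) : ENNReal.ofReal c * μ t ≤ ∫⁻ x, ENNReal.ofReal (g x) ∂μ :=
  calc
    ENNReal.ofReal c * μ t = ∫⁻ _ in t, ENNReal.ofReal c ∂μ := (setLIntegral_const t _).symm
    _ ≤ ∫⁻ x in t, ENNReal.ofReal (g x) ∂μ :=
      setLIntegral_mono' ht fun x hx => ENNReal.ofReal_le_ofReal (hc x hx)
    _ ≤ ∫⁻ x, ENNReal.ofReal (g x) ∂μ := setLIntegral_le_lintegral t _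

theorem ofReal_le_luxNorm_of_forall_mem_le (hmono : MonotoneOn Φ (Set.Ici 0))
    (ht : MeasurableSet t) {c k : ℝ} (hc : 0 ≤ c) (hk : 0 ≤ k) (hf : ∀ x ∈ t, c ≤ f x)
    (hlt : 1 < ENNReal.ofReal (Φ (c / k)) * μ t) : ENNReal.ofReal k ≤ luxNorm μ Φ f := by
  refine le_sInf ?_
  rintro _ ⟨k', hk', rfl, hint⟩
  refine ENNReal.ofReal_le_ofReal (le_of_not_gt fun hk'k => ?_)
  refine (hlt.trans_le (ofReal_mul_measure_le_lintegral ht fun x hx => ?_)).not_ge hint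
  have hquot : c / k ≤ f x / k' := div_le_div₀ (hc.trans (hf x hx)) (hf x hx) hk' hk'k.le
  have hnonneg : 0 ≤ c / k := div_nonneg hc hk
  exact hmono hnonneg (hnonneg.trans hquot) hquot

theorem luxNorm_eq_top_of_eq_const (hpos : ∀ x, x ≠ 0 → 0 < Φ x) (ht : MeasurableSet t)
    (htop : μ t = ∞) {w : ℝ} (hw : w ≠ 0) (hf : ∀ x ∈ t, f x = w) : luxNorm μ Φ f = ∞ := by
  refine sInf_eq_top.2 ?_
  rintro _ ⟨k, hk, rfl, hint⟩
  have hle : ENNReal.ofReal (Φ (w / k)) * μ t ≤ 1 :=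
    (ofReal_mul_measure_le_lintegral ht fun x hx => by rw [hf x hx]).trans hint
  have hΦ : ENNReal.ofReal (Φ (w / k)) ≠ 0 :=
    (ENNReal.ofReal_pos.2 (hpos _ (div_ne_zero hw hk.ne'))).ne'
  simp [htop, ENNReal.mul_top hΦ] at hle

theorem luxNorm_sub_const_eq_top (hμ : μ Set.univ = ∞) (hpos : ∀ x, x ≠ 0 → 0 < Φ x)
    (ht : MeasurableSet t) (hμt : μ t ≠ ∞) (hsupp : Function.support f ⊆ t) {z : ℝ}
    (hz : z ≠ 0) : luxNorm μ Φ (fun x => f x - z) = ∞ := by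
  have hcompl : μ tᶜ = ∞ := by
    by_contra hfin
    exact ENNReal.add_ne_top.2 ⟨hμt, hfin⟩ (measure_add_measure_compl ht ▸ hμ)
  refine luxNorm_eq_top_of_eq_const hpos ht.compl hcompl (neg_ne_zero.2 hz) fun x hx => ?_
  have hfx : f x = 0 := Function.notMem_support.1 (mt (@hsupp x) hx)
  rw [hfx, zero_sub]

end LuxemburgNorm

theorem exists_norm_fderiv_contDiffBump_le (E : Type*) [NormedAddCommGroup E] [NormedSpace ℝ E]
    [FiniteDimensional ℝ E] {R : ℝ} (hR : 1 < R) :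
    ∃ M > 0, ∀ (c : E) (φ : ContDiffBump c), φ.rOut / φ.rIn = R →
      ∀ x, ‖fderiv ℝ φ x‖ ≤ M / φ.rIn := by
  let φ₀ : ContDiffBump (0 : E) := ⟨1, R, one_pos, hR⟩
  obtain ⟨M, hM⟩ := (φ₀.hasCompactSupport.fderiv ℝ).exists_bound_of_continuous
    (φ₀.contDiff.continuous_fderiv one_ne_zero)
  refine ⟨max M 1, by positivity, fun c φ hφ x => ?_⟩
  have hscale : (φ : E → ℝ) = φ₀ ∘ fun y => φ.rIn⁻¹ • (y - c) := by
    funext y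
    simp [φ₀, ContDiffBump.apply, hφ]
  have hinner : HasFDerivAt (fun y => φ.rIn⁻¹ • (y - c)) (φ.rIn⁻¹ • ContinuousLinearMap.id ℝ E) x :=
    ((hasFDerivAt_id x).sub_const c).const_smul _
  have hderiv : fderiv ℝ φ x = φ.rIn⁻¹ • fderiv ℝ φ₀ (φ.rIn⁻¹ • (x - c)) := by
    have houter := (φ₀.contDiff.differentiable one_ne_zero (φ.rIn⁻¹ • (x - c))).hasFDerivAt
    rw [hscale, (houter.comp x hinner).fderiv, ContinuousLinearMap.comp_smul,
      ContinuousLinearMap.comp_id]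
  rw [hderiv, norm_smul, Real.norm_of_nonneg (inv_nonneg.2 φ.rIn_pos.le), ← div_eq_inv_mul]
  exact div_le_div_of_nonneg_right ((hM _).trans (le_max_left M 1)) φ.rIn_pos.le

theorem luxNorm_deriv_contDiffBump_le_ofReal {μ : Measure ℝ} {Φ : ℝ → ℝ}
    (heven : Function.Even Φ) (hmono : MonotoneOn Φ (Set.Ici 0)) (hzero : Φ 0 = 0) {c b k : ℝ}
    (φ : ContDiffBump c) (hk : 0 < k) (hb : ∀ x, ‖fderiv ℝ φ x‖ ≤ b)
    (hle : ENNReal.ofReal (Φ (b / k)) * μ (Metric.closedBall c φ.rOut) ≤ 1) :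
    luxNorm μ Φ (deriv φ) ≤ ENNReal.ofReal k :=
  luxNorm_le_ofReal_of_abs_le_s5 heven hmono hzero hk
    (support_deriv_subset.trans φ.tsupport_eq.subset)
    (fun x => norm_deriv_eq_norm_fderiv.trans_le (hb x)) hle

theorem ofReal_le_luxNorm_contDiffBump_sub_const {E : Type*} [NormedAddCommGroup E]
    [NormedSpace ℝ E] [FiniteDimensional ℝ E] [MeasurableSpace E] [BorelSpace E] {μ : Measure E}
    [IsFiniteMeasureOnCompacts μ] (hμ : μ Set.univ = ∞) {Φ : ℝ → ℝ} (hpos : ∀ x, x ≠ 0 → 0 < Φ x)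
    (hmono : MonotoneOn Φ (Set.Ici 0)) {c : E} (φ : ContDiffBump c) {k : ℝ} (hk : 0 ≤ k)
    (hlt : 1 < ENNReal.ofReal (Φ (1 / k)) * μ (Metric.closedBall c φ.rIn)) (z : ℝ) :
    ENNReal.ofReal k ≤ luxNorm μ Φ (fun x => φ x - z) := by
  rcases eq_or_ne z 0 with rfl | hz
  · simp only [sub_zero]
    exact ofReal_le_luxNorm_of_forall_mem_le hmono Metric.isClosed_closedBall.measurableSet
      zero_le_one hk (fun x hx => (φ.one_of_mem_closedBall hx).ge) hlt
  · rw [luxNorm_sub_const_eq_top hμ hpos (isClosed_tsupport φ).measurableSet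
      φ.hasCompactSupport.measure_ne_top (subset_tsupport φ) hz]
    exact le_top

theorem volume_eq_top_of_forall_exists_closedBall_subset {s : Set ℝ}
    (hs : ∀ L, ∃ c, Metric.closedBall c L ⊆ s) : volume s = ∞ := by
  refine ENNReal.eq_top_of_forall_nnreal_le fun L => ?_
  obtain ⟨c, hc⟩ := hs L
  calc
    (L : ℝ≥0∞) = ENNReal.ofReal L := (ENNReal.ofReal_coe_nnreal).symm
    _ ≤ ENNReal.ofReal (2 * L) :=
      ENNReal.ofReal_le_ofReal (le_mul_of_one_le_left L.coe_nonneg one_le_two)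
    _ = volume (Metric.closedBall c L) := (Real.volume_closedBall c L).symm
    _ ≤ volume s := measure_mono hc

theorem no_poincare_sobolev_orlicz_on_half_line_general {Φ₁ Φ₂ : ℝ → ℝ} {s : Set ℝ}
    (hnonneg₁ : ∀ x, 0 ≤ Φ₁ x) (hzero₁ : ∀ x, Φ₁ x = 0 → x = 0)
    (hmono₁ : MonotoneOn Φ₁ (Set.Ici 0))
    (heven₂ : Function.Even Φ₂) (hzero₂ : Φ₂ 0 = 0) (hmono₂ : MonotoneOn Φ₂ (Set.Ici 0))
    (hlim₂ : Tendsto (fun x => Φ₂ x / x) (𝓝[>] 0) (𝓝 0))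
    (hs : ∀ L, ∃ c, Metric.closedBall c L ⊆ s) {C : ℝ} (hC : 0 < C) :
    ∃ f : ℝ → ℝ, ContDiff ℝ (⊤ : ℕ∞) f ∧ HasCompactSupport f ∧ tsupport f ⊆ s ∧
      ∀ z : ℝ, ENNReal.ofReal C * luxNorm (volume.restrict s) Φ₂ (deriv f) <
        luxNorm (volume.restrict s) Φ₁ (fun x => f x - z) := by
  have hpos₁ : ∀ x, x ≠ 0 → 0 < Φ₁ x := fun x hx =>
    (hnonneg₁ x).lt_of_ne' (mt (hzero₁ x) hx)
  obtain ⟨M, hM, hbump⟩ := exists_norm_fderiv_contDiffBump_le ℝ one_lt_two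
  have hsmall : ∀ᶠ L in atTop, 4 * (L * Φ₂ (M / L)) ≤ 1 := by
    refine ((tendsto_mul_apply_div_atTop hlim₂ hM).const_mul 4).eventually_le_const ?_
    simp
  have hlarge : ∀ᶠ L in atTop, 1 < Φ₁ (1 / (C + 1)) * (2 * L) :=
    ((tendsto_id.const_mul_atTop two_pos).const_mul_atTop
      (hpos₁ _ (by positivity))).eventually_gt_atTop 1
  obtain ⟨L, hL, hL₂, hL₁⟩ := ((eventually_gt_atTop 0).and (hsmall.and hlarge)).exists
  obtain ⟨c, hc⟩ := hs (2 * L)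
  let φ : ContDiffBump c := ⟨L, 2 * L, hL, by linarith⟩
  have hderiv : luxNorm (volume.restrict s) Φ₂ (deriv φ) ≤ ENNReal.ofReal 1 := by
    refine luxNorm_deriv_contDiffBump_le_ofReal (b := M / L) heven₂ hmono₂ hzero₂ φ one_pos
      (hbump c φ (mul_div_cancel_right₀ 2 hL.ne')) ?_
    rw [Measure.restrict_eq_self _ hc, Real.volume_closedBall, div_one,
      ← ENNReal.ofReal_mul' (by positivity), ENNReal.ofReal_le_one]
    linarith
  have hsub : ∀ z, ENNReal.ofReal (C + 1) ≤ luxNorm (volume.restrict s) Φ₁ (fun x => φ x - z) := by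
    refine ofReal_le_luxNorm_contDiffBump_sub_const ?_ hpos₁ hmono₁ φ (by positivity) ?_
    · rw [Measure.restrict_apply_univ, volume_eq_top_of_forall_exists_closedBall_subset hs]
    · have hc' := (Metric.closedBall_subset_closedBall φ.rIn_lt_rOut.le).trans hc
      rwa [Measure.restrict_eq_self _ hc', Real.volume_closedBall,
        ← ENNReal.ofReal_mul (hnonneg₁ _), ENNReal.one_lt_ofReal]
  refine ⟨φ, φ.contDiff, φ.hasCompactSupport, φ.tsupport_eq.trans_subset hc, fun z => ?_⟩
  calc
    ENNReal.ofReal C * luxNorm (volume.restrict s) Φ₂ (deriv φ) ≤ ENNReal.ofReal C :=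
      mul_le_of_le_one_right' (hderiv.trans_eq ENNReal.ofReal_one)
    _ < ENNReal.ofReal (C + 1) :=
      (ENNReal.ofReal_lt_ofReal_iff (by positivity)).2 (lt_add_one C)
    _ ≤ luxNorm (volume.restrict s) Φ₁ (fun x => φ x - z) := hsub z

/-- The Poincaré–Sobolev–Orlicz inequality also fails on the half-line `(0, ∞)`: for any
N-functions `Φ₁, Φ₂` and any constant `C > 0` there is a smooth `f : ℝ → ℝ` whose support
is a compact subset of `(0, ∞)` such that `‖f - z‖_{(Φ₁),(0,∞)} > C ‖f'‖_{(Φ₂),(0,∞)}`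
for every `z ∈ ℝ`. -/
theorem no_poincare_sobolev_orlicz_on_half_line
    {Φ₁ Φ₂ : ℝ → ℝ} (h1 : IsNFunction Φ₁) (h2 : IsNFunction Φ₂) :
    ∀ C : ℝ, 0 < C → ∃ f : ℝ → ℝ, ContDiff ℝ (⊤ : ℕ∞) f ∧ HasCompactSupport f ∧
      tsupport f ⊆ Set.Ioi (0 : ℝ) ∧
      ∀ z : ℝ, ENNReal.ofReal C * luxNorm (volume.restrict (Set.Ioi 0)) Φ₂ (deriv f) <
        luxNorm (volume.restrict (Set.Ioi 0)) Φ₁ (fun x => f x - z) := by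
  intro C hC
  refine no_poincare_sobolev_orlicz_on_half_line_general h1.nonneg
    (fun x => (h1.zero_iff x).1) h1.monotoneOn_Ici h2.even h2.apply_zero h2.monotoneOn_Ici
    h2.tendsto_zero (fun L => ⟨L + 1, ?_⟩) hC
  rw [Real.closedBall_eq_Icc]
  exact fun x hx => lt_of_lt_of_le (by linarith) hx.1
end

section
/- Let Φ be an N-function satisfying the Δ₂-condition (there exists K > 2 with Φ(2x) ≤ K·Φ(x) for all x ≥ 0), and let a : ℝ → ℝ be a measurable function with ∫_ℝ Φ(a(x)) dx < ∞. Then for every ε > 0 there exists an integrable function g : ℝ → ℝ with compact support such that ∫_ℝ g(x) dx = 0 and ‖g − a‖_{(Φ)} < ε, where ‖·‖_{(Φ)} is the Luxemburg norm with respect to Lebesgue measure. (Consequently, for any N-function Φ₁, the first reduced L_{Φ₁,Φ}-cohomology of ℝ vanishes: every 1-form a(x)dx in L^Φ(ℝ) is the limit in L^Φ of differentials of compactly supported functions.) -/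
open MeasureTheory ENNReal

/-!
Cut `a` off outside a large set `s` of finite measure and restore mean zero by subtracting the
constant `c / M` on a set `t` of measure `M`, where `c = ∫ₛ a`. Under `Δ₂` the discarded tail is
small in norm because its modular is small. The correction has modular `M Φ(c / (k M))` at scale
`k`, which tends to `0` as `M → ∞` because `Φ(y) / y → 0` as `y → 0`: a fixed amount of mass, spread
over a set of large measure, costs nothing.
-/

section

open Filter Set Topology

/-- A finite-valued Young function: even, convex, zero at the origin and not identically zero.
Unlike an N-function it may vanish near `0` and may grow linearly, at `0` or at infinity. -/
structure IsYoungFunction (Φ : ℝ → ℝ) : Prop where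
  even : ∀ x, Φ (-x) = Φ x
  convex : ConvexOn ℝ univ Φ
  map_zero : Φ 0 = 0
  exists_ne_zero : ∃ x, Φ x ≠ 0

/-- The global `Δ₂`-condition `Φ(2x) ≤ K Φ(x)` for `x ≥ 0`, which makes convergence of modulars and
convergence in the Luxemburg norm equivalent. -/
def DeltaTwo (Φ : ℝ → ℝ) : Prop :=
  ∃ K : ℝ, ∀ x, 0 ≤ x → Φ (2 * x) ≤ K * Φ x

theorem IsNFunction.isYoungFunction {Φ : ℝ → ℝ} (hΦ : IsNFunction Φ) : IsYoungFunction Φ where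
  even := hΦ.even
  convex := hΦ.convex
  map_zero := (hΦ.zero_iff 0).2 rfl
  exists_ne_zero := ⟨1, fun h => one_ne_zero ((hΦ.zero_iff 1).1 h)⟩

namespace IsYoungFunction

variable {Φ : ℝ → ℝ}

theorem map_abs (hΦ : IsYoungFunction Φ) (x : ℝ) : Φ |x| = Φ x := by
  rcases abs_choice x with h | h <;> rw [h]
  exact hΦ.even x

theorem nonneg (hΦ : IsYoungFunction Φ) (x : ℝ) : 0 ≤ Φ x := by
  have h := hΦ.convex.2 (mem_univ x) (mem_univ (-x)) one_half_pos.le one_half_pos.le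
    (add_halves 1)
  simp only [smul_eq_mul, mul_neg, add_neg_cancel, hΦ.map_zero, hΦ.even] at h
  linarith

theorem continuous (hΦ : IsYoungFunction Φ) : Continuous Φ :=
  continuousOn_univ.1 (hΦ.convex.continuousOn isOpen_univ)

theorem map_mul_le (hΦ : IsYoungFunction Φ) {t : ℝ} (ht : |t| ≤ 1) (x : ℝ) :
    Φ (t * x) ≤ |t| * Φ x := by
  have h := hΦ.convex.2 (mem_univ |x|) (mem_univ 0) (abs_nonneg t) (sub_nonneg.2 ht)
    (add_sub_cancel _ _)
  simpa only [smul_eq_mul, mul_zero, add_zero, ← abs_mul, hΦ.map_abs, hΦ.map_zero] using h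

theorem exists_abs_le (hΦ : IsYoungFunction Φ) : ∃ A B : ℝ, ∀ x, |x| ≤ A + B * Φ x := by
  obtain ⟨x₀, hx₀⟩ := hΦ.exists_ne_zero
  have hpos : 0 < Φ x₀ := (hΦ.nonneg x₀).lt_of_ne' hx₀
  refine ⟨|x₀|, |x₀| / Φ x₀, fun x => ?_⟩
  have hnonneg : 0 ≤ |x₀| / Φ x₀ * Φ x := mul_nonneg (by positivity) (hΦ.nonneg x)
  rcases le_total |x| |x₀| with hx | hx
  · linarith
  rcases eq_or_ne x 0 with rfl | hx0
  · simpa only [abs_zero] using add_nonneg (abs_nonneg x₀) hnonneg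
  have hxpos : 0 < |x| := abs_pos.2 hx0
  have hslope : Φ x₀ ≤ |x₀| / |x| * Φ x := by
    have h := hΦ.map_mul_le (t := x₀ / x) (by rwa [abs_div, div_le_one hxpos]) x
    rwa [div_mul_cancel₀ _ hx0, abs_div] at h
  have : |x| ≤ |x₀| / Φ x₀ * Φ x := by
    rw [div_mul_eq_mul_div, le_div_iff₀ hxpos] at hslope
    rw [div_mul_eq_mul_div, le_div_iff₀ hpos]
    linarith
  linarith [abs_nonneg x₀]

theorem map_two_pow_mul_le (hΦ : IsYoungFunction Φ) {K : ℝ} (hK : 0 ≤ K)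
    (h : ∀ x, 0 ≤ x → Φ (2 * x) ≤ K * Φ x) (m : ℕ) (x : ℝ) : Φ (2 ^ m * x) ≤ K ^ m * Φ x := by
  induction m with
  | zero => simp only [pow_zero, one_mul, le_refl]
  | succ m ih =>
    calc Φ (2 ^ (m + 1) * x) = Φ (2 * |2 ^ m * x|) := by
          rw [← hΦ.map_abs, pow_succ', mul_assoc, abs_mul, abs_two]
      _ ≤ K * Φ (2 ^ m * x) := by simpa only [hΦ.map_abs] using h _ (abs_nonneg (2 ^ m * x))
      _ ≤ K * (K ^ m * Φ x) := mul_le_mul_of_nonneg_left ih hK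
      _ = K ^ (m + 1) * Φ x := by ring

theorem exists_map_mul_le (hΦ : IsYoungFunction Φ) (hΔ : DeltaTwo Φ) (b : ℝ) :
    ∃ C : ℝ, 0 ≤ C ∧ ∀ x, Φ (b * x) ≤ C * Φ x := by
  obtain ⟨K, hK⟩ := hΔ
  obtain ⟨m, hm⟩ := pow_unbounded_of_one_lt |b| one_lt_two
  have hK' (x : ℝ) (hx : 0 ≤ x) : Φ (2 * x) ≤ max K 0 * Φ x :=
    (hK x hx).trans (mul_le_mul_of_nonneg_right (le_max_left K 0) (hΦ.nonneg x))
  have hb : |b / 2 ^ m| ≤ 1 := by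
    rw [abs_div, abs_of_pos (by positivity : (0 : ℝ) < 2 ^ m)]
    exact div_le_one_of_le₀ hm.le (by positivity)
  refine ⟨max K 0 ^ m, by positivity, fun x => ?_⟩
  calc Φ (b * x) = Φ (b / 2 ^ m * (2 ^ m * x)) := by congr 1; field_simp
    _ ≤ |b / 2 ^ m| * Φ (2 ^ m * x) := hΦ.map_mul_le hb _
    _ ≤ Φ (2 ^ m * x) := mul_le_of_le_one_left (hΦ.nonneg _) hb
    _ ≤ max K 0 ^ m * Φ x := hΦ.map_two_pow_mul_le (le_max_right K 0) hK' m x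

theorem tendsto_mul_map_div_atTop (hΦ : IsYoungFunction Φ)
    (hΦ₀ : Tendsto (fun x => Φ x / x) (𝓝[>] 0) (𝓝 0)) (c : ℝ) :
    Tendsto (fun M => M * Φ (c / M)) atTop (𝓝 0) := by
  rcases eq_or_ne c 0 with rfl | hc
  · simp only [zero_div, hΦ.map_zero, mul_zero, tendsto_const_nhds]
  have hc' : 0 < |c| := abs_pos.2 hc
  have hdiv : Tendsto (fun M => |c| / M) atTop (𝓝[>] 0) :=
    tendsto_nhdsWithin_iff.2 ⟨tendsto_const_nhds.div_atTop tendsto_id,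
      (eventually_gt_atTop 0).mono fun M hM => div_pos hc' hM⟩
  have hmul := (hΦ₀.comp hdiv).const_mul |c|
  rw [mul_zero] at hmul
  refine hmul.congr' ((eventually_gt_atTop 0).mono fun M hM => ?_)
  calc |c| * (Φ (|c| / M) / (|c| / M)) = M * Φ (|c| / M) := by field_simp
    _ = M * Φ (c / M) := by rw [← hΦ.map_abs (c / M), abs_div, abs_of_pos hM]

end IsYoungFunction

variable {α : Type*} [MeasurableSpace α] {μ : Measure α}

theorem tendsto_setLIntegral_of_antitone_of_iInter_eq_empty {F : α → ℝ≥0∞}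
    (hF : ∫⁻ x, F x ∂μ ≠ ∞) {s : ℕ → Set α} (hsm : ∀ n, MeasurableSet (s n)) (hs : Antitone s)
    (hs₀ : ⋂ n, s n = ∅) : Tendsto (fun n => ∫⁻ x in s n, F x ∂μ) atTop (𝓝 0) := by
  have hfin : μ.withDensity F (s 0) ≠ ∞ := by
    rw [withDensity_apply F (hsm 0)]
    exact ne_top_of_le_ne_top hF (setLIntegral_le_lintegral _ _)
  have h := tendsto_measure_iInter_atTop (fun n => (hsm n).nullMeasurableSet) hs ⟨0, hfin⟩
  simpa only [hs₀, measure_empty, Function.comp_def, withDensity_apply F (hsm _)] using h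

theorem tendsto_luxNorm_zero {Φ : ℝ → ℝ} {ι : Type*} {l : Filter ι} {f : ι → α → ℝ}
    (h : ∀ k : ℝ, 0 < k → ∀ᶠ i in l, ∫⁻ x, ENNReal.ofReal (Φ (f i x / k)) ∂μ ≤ 1) :
    Tendsto (fun i => luxNorm μ Φ (f i)) l (𝓝 0) := by
  refine ENNReal.tendsto_nhds_zero.2 fun ε hε => ?_
  obtain ⟨k, hk, hkε⟩ := ENNReal.lt_iff_exists_nnreal_btwn.1 hε
  filter_upwards [h k (by exact_mod_cast hk)] with i hi
  calc luxNorm μ Φ (f i) ≤ k :=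
        sInf_le ⟨k, by exact_mod_cast hk, ENNReal.ofReal_coe_nnreal.symm, hi⟩
    _ ≤ ε := hkε.le

namespace IsYoungFunction

variable {Φ : ℝ → ℝ}

theorem luxNorm_neg (hΦ : IsYoungFunction Φ) (f : α → ℝ) :
    luxNorm μ Φ (fun x => -f x) = luxNorm μ Φ f := by
  unfold luxNorm
  simp only [neg_div, hΦ.even]

theorem map_add_div_add_le (hΦ : IsYoungFunction Φ) {k l : ℝ} (hk : 0 < k) (hl : 0 < l)
    (x y : ℝ) :
    Φ ((x + y) / (k + l)) ≤ k / (k + l) * Φ (x / k) + l / (k + l) * Φ (y / l) := by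
  have hcomb : (x + y) / (k + l) = k / (k + l) * (x / k) + l / (k + l) * (y / l) := by field_simp
  rw [hcomb]
  exact hΦ.convex.2 (mem_univ (x / k)) (mem_univ (y / l)) (by positivity) (by positivity)
    (by field_simp)

theorem lintegral_add_div_add_le_one (hΦ : IsYoungFunction Φ) {f g : α → ℝ}
    (hf : AEMeasurable f μ) {k l : ℝ} (hk : 0 < k) (hl : 0 < l)
    (hfk : ∫⁻ x, ENNReal.ofReal (Φ (f x / k)) ∂μ ≤ 1)
    (hgl : ∫⁻ x, ENNReal.ofReal (Φ (g x / l)) ∂μ ≤ 1) :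
    ∫⁻ x, ENNReal.ofReal (Φ ((f x + g x) / (k + l))) ∂μ ≤ 1 := by
  have hkl : 0 ≤ k / (k + l) := by positivity
  have hlk : 0 ≤ l / (k + l) := by positivity
  have hfm : AEMeasurable (fun x => ENNReal.ofReal (Φ (f x / k))) μ :=
    (hΦ.continuous.measurable.comp_aemeasurable (hf.div_const k)).ennreal_ofReal
  calc ∫⁻ x, ENNReal.ofReal (Φ ((f x + g x) / (k + l))) ∂μ
      ≤ ∫⁻ x, (ENNReal.ofReal (k / (k + l)) * ENNReal.ofReal (Φ (f x / k)) +
          ENNReal.ofReal (l / (k + l)) * ENNReal.ofReal (Φ (g x / l))) ∂μ := by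
        refine lintegral_mono fun x => ?_
        rw [← ENNReal.ofReal_mul hkl, ← ENNReal.ofReal_mul hlk,
          ← ENNReal.ofReal_add (mul_nonneg hkl (hΦ.nonneg _)) (mul_nonneg hlk (hΦ.nonneg _))]
        exact ENNReal.ofReal_le_ofReal (hΦ.map_add_div_add_le hk hl (f x) (g x))
    _ = ENNReal.ofReal (k / (k + l)) * ∫⁻ x, ENNReal.ofReal (Φ (f x / k)) ∂μ +
          ENNReal.ofReal (l / (k + l)) * ∫⁻ x, ENNReal.ofReal (Φ (g x / l)) ∂μ := by
        rw [lintegral_add_left' (hfm.const_mul _), lintegral_const_mul' _ _ ENNReal.ofReal_ne_top,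
          lintegral_const_mul' _ _ ENNReal.ofReal_ne_top]
    _ ≤ ENNReal.ofReal (k / (k + l)) * 1 + ENNReal.ofReal (l / (k + l)) * 1 := by gcongr
    _ = 1 := by
        rw [mul_one, mul_one, ← ENNReal.ofReal_add hkl hlk, ← add_div, div_self (by positivity),
          ENNReal.ofReal_one]

theorem luxNorm_add_le (hΦ : IsYoungFunction Φ) {f : α → ℝ} (hf : AEMeasurable f μ)
    (g : α → ℝ) : luxNorm μ Φ (fun x => f x + g x) ≤ luxNorm μ Φ f + luxNorm μ Φ g := by
  simp only [luxNorm, sInf_eq_iInf]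
  refine ENNReal.le_iInf₂_add_iInf₂ ?_
  rintro _ ⟨k, hk, rfl, hfk⟩ _ ⟨l, hl, rfl, hgl⟩
  exact iInf₂_le _ ⟨k + l, add_pos hk hl, (ENNReal.ofReal_add hk.le hl.le).symm,
    hΦ.lintegral_add_div_add_le_one hf hk hl hfk hgl⟩

theorem lintegral_indicator_div (hΦ : IsYoungFunction Φ) {s : Set α} (hs : MeasurableSet s)
    (f : α → ℝ) (k : ℝ) :
    ∫⁻ x, ENNReal.ofReal (Φ (s.indicator f x / k)) ∂μ =
      ∫⁻ x in s, ENNReal.ofReal (Φ (f x / k)) ∂μ := by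
  have h₀ : ENNReal.ofReal (Φ (0 / k)) = 0 := by rw [zero_div, hΦ.map_zero, ENNReal.ofReal_zero]
  rw [← lintegral_indicator hs]
  exact lintegral_congr fun x => congrFun
    (indicator_comp_of_zero (g := fun y => ENNReal.ofReal (Φ (y / k))) h₀).symm x

theorem integrableOn (hΦ : IsYoungFunction Φ) {a : α → ℝ} (ha : AEMeasurable a μ)
    (hint : ∫⁻ x, ENNReal.ofReal (Φ (a x)) ∂μ ≠ ∞) {s : Set α} (hs : μ s ≠ ∞) :
    IntegrableOn a s μ := by
  obtain ⟨A, B, hAB⟩ := hΦ.exists_abs_le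
  have hΦa : Integrable (fun x => Φ (a x)) μ :=
    (lintegral_ofReal_ne_top_iff_integrable
      (hΦ.continuous.measurable.comp_aemeasurable ha).aestronglyMeasurable
      (ae_of_all μ fun x => hΦ.nonneg (a x))).1 hint
  exact ((integrableOn_const (C := A) hs).add (hΦa.integrableOn.const_mul B)).mono'
    ha.aestronglyMeasurable.restrict (ae_of_all _ fun x => hAB (a x))

theorem lintegral_div_ne_top (hΦ : IsYoungFunction Φ) (hΔ : DeltaTwo Φ) {a : α → ℝ}
    (hint : ∫⁻ x, ENNReal.ofReal (Φ (a x)) ∂μ ≠ ∞) (k : ℝ) :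
    ∫⁻ x, ENNReal.ofReal (Φ (a x / k)) ∂μ ≠ ∞ := by
  obtain ⟨C, hC₀, hC⟩ := hΦ.exists_map_mul_le hΔ k⁻¹
  refine ne_top_of_le_ne_top (ENNReal.mul_ne_top (ENNReal.ofReal_ne_top (r := C)) hint) ?_
  calc ∫⁻ x, ENNReal.ofReal (Φ (a x / k)) ∂μ
      ≤ ∫⁻ x, ENNReal.ofReal C * ENNReal.ofReal (Φ (a x)) ∂μ := by
        refine lintegral_mono fun x => ?_
        rw [← ENNReal.ofReal_mul hC₀, div_eq_inv_mul]
        exact ENNReal.ofReal_le_ofReal (hC (a x))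
    _ = ENNReal.ofReal C * ∫⁻ x, ENNReal.ofReal (Φ (a x)) ∂μ :=
        lintegral_const_mul' _ _ ENNReal.ofReal_ne_top

theorem tendsto_luxNorm_indicator (hΦ : IsYoungFunction Φ) (hΔ : DeltaTwo Φ) {a : α → ℝ}
    (hint : ∫⁻ x, ENNReal.ofReal (Φ (a x)) ∂μ ≠ ∞) {s : ℕ → Set α}
    (hsm : ∀ n, MeasurableSet (s n)) (hs : Antitone s) (hs₀ : ⋂ n, s n = ∅) :
    Tendsto (fun n => luxNorm μ Φ ((s n).indicator a)) atTop (𝓝 0) := by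
  refine tendsto_luxNorm_zero fun k _ => ?_
  simp only [hΦ.lintegral_indicator_div (hsm _)]
  exact (tendsto_setLIntegral_of_antitone_of_iInter_eq_empty
    (hΦ.lintegral_div_ne_top hΔ hint k) hsm hs hs₀).eventually_le_const zero_lt_one

theorem tendsto_luxNorm_indicator_const_div (hΦ : IsYoungFunction Φ)
    (hΦ₀ : Tendsto (fun x => Φ x / x) (𝓝[>] 0) (𝓝 0)) {ι : Type*} {l : Filter ι} {t : ι → Set α}
    (htm : ∀ i, MeasurableSet (t i)) (ht : Tendsto (fun i => μ.real (t i)) l atTop) (c : ℝ) :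
    Tendsto (fun i => luxNorm μ Φ ((t i).indicator fun _ => c / μ.real (t i))) l (𝓝 0) := by
  refine tendsto_luxNorm_zero fun k _ => ?_
  filter_upwards [ht.eventually_gt_atTop 0, ((hΦ.tendsto_mul_map_div_atTop hΦ₀ (c / k)).comp
    ht).eventually_le_const zero_lt_one] with i hpos hle
  have hfin : μ (t i) ≠ ∞ := fun h => hpos.ne' (by rw [measureReal_def, h, ENNReal.toReal_top])
  rw [hΦ.lintegral_indicator_div (htm i), setLIntegral_const, ← ofReal_measureReal hfin,
    ← ENNReal.ofReal_mul (hΦ.nonneg _), mul_comm, div_right_comm]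
  exact ENNReal.ofReal_le_one.2 hle

end IsYoungFunction

/-- The function `a` cut off outside `s`, with the constant that makes the total integral vanish
subtracted on `t`. The sets `s` and `t` may overlap, so that one set can serve as both. -/
noncomputable def meanZeroTruncation (μ : Measure α) (s t : Set α) (a : α → ℝ) (x : α) : ℝ :=
  s.indicator a x - t.indicator (fun _ => (∫ y in s, a y ∂μ) / μ.real t) x

section meanZeroTruncation

variable {s t : Set α} {a : α → ℝ}

theorem support_meanZeroTruncation_subset :
    Function.support (meanZeroTruncation μ s t a) ⊆ s ∪ t :=
  (Function.support_sub _ _).trans (union_subset_union support_indicator_subset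
    support_indicator_subset)

theorem integrable_meanZeroTruncation (hs : MeasurableSet s) (ht : MeasurableSet t)
    (ht' : μ t ≠ ∞) (ha : IntegrableOn a s μ) : Integrable (meanZeroTruncation μ s t a) μ :=
  (ha.integrable_indicator hs).sub ((integrableOn_const ht').integrable_indicator ht)

theorem integral_meanZeroTruncation (hs : MeasurableSet s) (ht : MeasurableSet t)
    (ht' : μ t ≠ ∞) (ht₀ : μ t ≠ 0) (ha : IntegrableOn a s μ) :
    ∫ x, meanZeroTruncation μ s t a x ∂μ = 0 := by
  simp only [meanZeroTruncation]
  rw [integral_sub (ha.integrable_indicator hs) ((integrableOn_const ht').integrable_indicator ht),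
    integral_indicator hs, integral_indicator_const _ ht, smul_eq_mul,
    mul_div_cancel₀ _ ((measureReal_ne_zero_iff ht').2 ht₀), sub_self]

theorem IsYoungFunction.luxNorm_meanZeroTruncation_sub_le {Φ : ℝ → ℝ} (hΦ : IsYoungFunction Φ)
    (hs : MeasurableSet s) (ha : AEMeasurable a μ) :
    luxNorm μ Φ (fun x => meanZeroTruncation μ s t a x - a x) ≤ luxNorm μ Φ (sᶜ.indicator a) +
      luxNorm μ Φ (t.indicator fun _ => (∫ y in s, a y ∂μ) / μ.real t) := by
  rw [← hΦ.luxNorm_neg]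
  convert hΦ.luxNorm_add_le (ha.indicator hs.compl) _ using 3 with x
  rw [meanZeroTruncation, indicator_compl, Pi.sub_apply]
  ring

end meanZeroTruncation

theorem tendsto_measureReal_iUnion_atTop {S : ℕ → Set α} (hS : Monotone S)
    (hSfin : ∀ n, μ (S n) ≠ ∞) (hμ : μ (⋃ n, S n) = ∞) :
    Tendsto (fun n => μ.real (S n)) atTop atTop := by
  rw [← ENNReal.tendsto_ofReal_nhds_top, ← hμ]
  simpa only [ofReal_measureReal (hSfin _)] using! tendsto_measure_iUnion_atTop hS

theorem IsYoungFunction.exists_luxNorm_meanZeroTruncation_sub_lt {Φ : ℝ → ℝ}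
    (hΦ : IsYoungFunction Φ) (hΦ₀ : Tendsto (fun x => Φ x / x) (𝓝[>] 0) (𝓝 0)) (hΔ : DeltaTwo Φ)
    {S : ℕ → Set α} (hSm : ∀ n, MeasurableSet (S n)) (hS : Monotone S)
    (hSuniv : ⋃ n, S n = univ) (hStop : Tendsto (fun n => μ.real (S n)) atTop atTop)
    {a : α → ℝ} (ha : AEMeasurable a μ) (hint : ∫⁻ x, ENNReal.ofReal (Φ (a x)) ∂μ ≠ ∞)
    {ε : ℝ≥0∞} (hε : ε ≠ 0) :
    ∃ m n, μ (S n) ≠ 0 ∧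
      luxNorm μ Φ (fun x => meanZeroTruncation μ (S m) (S n) a x - a x) < ε := by
  have hε' : 0 < ε / 2 := ENNReal.half_pos hε
  have htail := hΦ.tendsto_luxNorm_indicator hΔ hint (fun n => (hSm n).compl)
    (fun _ _ h => compl_subset_compl.2 (hS h)) (by rw [← compl_iUnion, hSuniv, compl_univ])
  obtain ⟨m, hm⟩ := (htail.eventually_lt_const hε').exists
  have hcorrection := hΦ.tendsto_luxNorm_indicator_const_div hΦ₀ hSm hStop (∫ x in S m, a x ∂μ)
  obtain ⟨n, hn, hpos⟩ :=
    ((hcorrection.eventually_lt_const hε').and (hStop.eventually_gt_atTop 0)).exists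
  refine ⟨m, n, fun h => hpos.ne' (by rw [measureReal_def, h, ENNReal.toReal_zero]), ?_⟩
  refine (hΦ.luxNorm_meanZeroTruncation_sub_le (hSm m) ha).trans_lt ?_
  simpa only [ENNReal.add_halves] using ENNReal.add_lt_add hm hn

theorem reduced_orlicz_cohomology_real_line_vanishes_general [TopologicalSpace α] [T2Space α]
    [SigmaCompactSpace α] [OpensMeasurableSpace α] [IsFiniteMeasureOnCompacts μ]
    (hμ : μ univ = ∞) {Φ : ℝ → ℝ} (hΦ : IsYoungFunction Φ)
    (hΦ₀ : Tendsto (fun x => Φ x / x) (𝓝[>] 0) (𝓝 0)) (hΔ : DeltaTwo Φ) {a : α → ℝ}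
    (ha : AEMeasurable a μ) (hint : ∫⁻ x, ENNReal.ofReal (Φ (a x)) ∂μ < ∞) {ε : ℝ≥0∞}
    (hε : 0 < ε) :
    ∃ g : α → ℝ, Integrable g μ ∧ HasCompactSupport g ∧ ∫ x, g x ∂μ = 0 ∧
      luxNorm μ Φ (fun x => g x - a x) < ε := by
  let S := compactCovering α
  have hcompact : ∀ n, IsCompact (S n) := isCompact_compactCovering α
  have hmeas n : MeasurableSet (S n) := (hcompact n).measurableSet
  have hfin n : μ (S n) ≠ ∞ := (hcompact n).measure_ne_top
  have hmono : Monotone S := fun _ _ h => compactCovering_subset α h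
  have hreal := tendsto_measureReal_iUnion_atTop hmono hfin (by rwa [iUnion_compactCovering α])
  obtain ⟨m, n, hn, hlt⟩ := hΦ.exists_luxNorm_meanZeroTruncation_sub_lt hΦ₀ hΔ hmeas hmono
    (iUnion_compactCovering α) hreal ha hint.ne hε.ne'
  have hon := hΦ.integrableOn ha hint.ne (hfin m)
  exact ⟨meanZeroTruncation μ (S m) (S n) a,
    integrable_meanZeroTruncation (hmeas m) (hmeas n) (hfin n) hon,
    .of_support_subset_isCompact ((hcompact m).union (hcompact n))
      support_meanZeroTruncation_subset,
    integral_meanZeroTruncation (hmeas m) (hmeas n) (hfin n) hn hon, hlt⟩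

end

/-- If `Φ` is an N-function satisfying the `Δ₂`-condition and `a : ℝ → ℝ` is measurable with
`∫ Φ(a) < ∞`, then `a` can be approximated arbitrarily well in the Luxemburg norm by
compactly supported integrable functions of zero mean. (Hence the first reduced
`L_{Φ₁,Φ}`-cohomology of `ℝ` vanishes.) -/
theorem reduced_orlicz_cohomology_real_line_vanishes
    {Φ : ℝ → ℝ} (hΦ : IsNFunction Φ)
    (hΔ2 : ∃ K : ℝ, 2 < K ∧ ∀ x : ℝ, 0 ≤ x → Φ (2 * x) ≤ K * Φ x)
    {a : ℝ → ℝ} (ha : Measurable a)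
    (hint : (∫⁻ x : ℝ, ENNReal.ofReal (Φ (a x))) < ⊤) :
    ∀ ε : ℝ, 0 < ε → ∃ g : ℝ → ℝ, Integrable g ∧ HasCompactSupport g ∧
      (∫ x : ℝ, g x) = 0 ∧ luxNorm volume Φ (fun x => g x - a x) < ENNReal.ofReal ε := fun _ hε =>
  reduced_orlicz_cohomology_real_line_vanishes_general Real.volume_univ hΦ.isYoungFunction
    hΦ.tendsto_zero (hΔ2.imp fun _ hK => hK.2) ha.aemeasurable hint (ENNReal.ofReal_pos.2 hε)
end

section
/- There exist smooth functions f, g : ℝ² → ℝ, written in coordinates (y, z), with the following properties: (1) f and g are nonnegative; (2) f(y,z) = g(y,z) = 0 whenever z ≤ 0 or |y| ≥ 1; (3) the partial derivatives ∂f/∂y and ∂g/∂y are bounded on ℝ²; (4) the partial derivatives ∂f/∂z and ∂g/∂z have compact support; (5) the Jacobian J = (∂f/∂y)(∂g/∂z) − (∂f/∂z)(∂g/∂y) is nonnegative everywhere, vanishes outside the rectangle [−1,1] × [0,1], and satisfies ∫_{ℝ²} J dy dz = 1; and (6) for every N-function Φ satisfying ∫_0^1 Φ(v)/v² dv < ∞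 and every a > 0, ∫_{ℝ²} Φ( a·√( e^{−2z}(∂f/∂y)² + (∂f/∂z)² ) ) · e^{z} dy dz < ∞, and the same with f replaced by g. -/
open MeasureTheory ENNReal

/-- Partial derivative in the first (`y`) coordinate. -/
noncomputable def pdy (f : ℝ × ℝ → ℝ) (p : ℝ × ℝ) : ℝ := deriv (fun y => f (y, p.2)) p.1

/-- Partial derivative in the second (`z`) coordinate. -/
noncomputable def pdz (f : ℝ × ℝ → ℝ) (p : ℝ × ℝ) : ℝ := deriv (fun z => f (p.1, z)) p.2

/-!
Take a bump `u` on `(-1, 1)` with `∫ u² = 2` and a smooth step `v` from `0` to `1` on `[0, 1]`,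
and put `f(y, z) = (y + 2) u(y) v(z)` and `g(y, z) = u(y) v(z)`. In `df ∧ dg` the derivative of `u`
cancels, leaving `J = u(y)² v(z) v'(z)`, whose integral is `(∫ u²) · [v² / 2] = 1`. The factor
`y + 2` only serves as a function of derivative `1` that is positive on `(-1, 1)`.

Since `∂f/∂z` has compact support and the metric scales `∂f/∂y` by `e^{-z}`, we have
`|df| ≤ C e^{-z}`. The substitution `t = a C e^{-z}` then turns the integral of `Φ (a C e^{-z})`
against the density `e^z dz` into `a C ∫ Φ(t) / t² dt` over `0 < t ≤ a C`, finite by condition (A).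
-/

open Set Filter Topology

/-! ### Orlicz integrals of exponentially decaying functions -/

lemma IsNFunction.monotoneOn {Φ : ℝ → ℝ} (hΦ : IsNFunction Φ) : MonotoneOn Φ (Ici 0) := by
  intro x hx y _ hxy
  rcases hxy.eq_or_lt with rfl | hxy
  · rfl
  rcases (mem_Ici.1 hx).eq_or_lt with rfl | hx
  · exact ((hΦ.zero_iff 0).2 rfl).trans_le (hΦ.nonneg y)
  refine hΦ.convex.le_right_of_left_le (mem_univ 0) (mem_univ y) ?_ ?_
  · exact openSegment_eq_Ioo (hx.trans hxy) ▸ ⟨hx, hxy⟩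
  · exact ((hΦ.zero_iff 0).2 rfl).trans_le (hΦ.nonneg x)

lemma image_mul_exp_neg_Ici {A : ℝ} (hA : 0 < A) :
    (fun z => A * Real.exp (-z)) '' Ici 0 = Ioc 0 A := by
  ext t
  constructor
  · rintro ⟨z, hz, rfl⟩
    exact ⟨by positivity, mul_le_of_le_one_right hA.le (by simpa using hz)⟩
  · rintro ⟨ht, htA⟩
    refine ⟨Real.log (A / t), Real.log_nonneg ((one_le_div ht).2 htA), ?_⟩
    simp only [Real.exp_neg, Real.exp_log (div_pos hA ht)]
    field_simp

lemma setLIntegral_Ici_comp_mul_exp_neg_mul_exp (Φ : ℝ → ℝ) {A : ℝ} (hA : 0 < A) :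
    ∫⁻ z in Ici 0, ENNReal.ofReal (Φ (A * Real.exp (-z)) * Real.exp z) =
      ENNReal.ofReal A * ∫⁻ t in Ioc 0 A, ENNReal.ofReal (Φ t / t ^ 2) := by
  have hderiv : ∀ z ∈ Ici (0 : ℝ),
      HasDerivWithinAt (fun z => A * Real.exp (-z)) (-(A * Real.exp (-z))) (Ici 0) z := by
    intro z _
    simpa using ((hasDerivAt_neg z).exp.const_mul A).hasDerivWithinAt (s := Ici 0)
  have hinj : InjOn (fun z => A * Real.exp (-z)) (Ici 0) := fun x _ y _ h =>
    neg_injective (Real.exp_injective (mul_left_cancel₀ hA.ne' h))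
  rw [← image_mul_exp_neg_Ici hA,
    lintegral_image_eq_lintegral_abs_deriv_mul measurableSet_Ici hderiv hinj,
    ← lintegral_const_mul' _ _ ENNReal.ofReal_ne_top]
  refine lintegral_congr fun z => ?_
  rw [← ENNReal.ofReal_mul (abs_nonneg _), ← ENNReal.ofReal_mul hA.le, abs_neg,
    abs_of_pos (by positivity), Real.exp_neg]
  congr 1
  field_simp

lemma setLIntegral_Ioc_div_sq_lt_top {Φ : ℝ → ℝ} (hΦ : MonotoneOn Φ (Ici 0))
    (hint : ∫⁻ t in Ioo (0 : ℝ) 1, ENNReal.ofReal (Φ t / t ^ 2) < ⊤) (A : ℝ) :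
    ∫⁻ t in Ioc 0 A, ENNReal.ofReal (Φ t / t ^ 2) < ⊤ := by
  have hcover : Ioc 0 A ⊆ Ioo 0 1 ∪ Icc 1 A := fun t ht =>
    (lt_or_ge t 1).imp (fun h => ⟨ht.1, h⟩) (fun h => ⟨h, ht.2⟩)
  have hbound : ∀ t ∈ Icc 1 A, ENNReal.ofReal (Φ t / t ^ 2) ≤ ENNReal.ofReal (Φ A) := by
    rintro t ⟨h1t, htA⟩
    have ht : 0 ≤ t := zero_le_one.trans h1t
    calc ENNReal.ofReal (Φ t / t ^ 2)
        = ENNReal.ofReal (Φ t) / ENNReal.ofReal (t ^ 2) := ENNReal.ofReal_div_of_pos (by positivity)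
      _ ≤ ENNReal.ofReal (Φ t) / 1 := by
          gcongr
          exact ENNReal.one_le_ofReal.2 (one_le_pow₀ h1t)
      _ ≤ ENNReal.ofReal (Φ A) := by
          rw [div_one]
          exact ENNReal.ofReal_le_ofReal (hΦ ht (ht.trans htA) htA)
  calc ∫⁻ t in Ioc 0 A, ENNReal.ofReal (Φ t / t ^ 2)
      ≤ ∫⁻ t in Ioo 0 1 ∪ Icc 1 A, ENNReal.ofReal (Φ t / t ^ 2) := lintegral_mono_set hcover
    _ ≤ (∫⁻ t in Ioo 0 1, ENNReal.ofReal (Φ t / t ^ 2)) +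
          ∫⁻ t in Icc 1 A, ENNReal.ofReal (Φ t / t ^ 2) := lintegral_union_le _ _ _
    _ ≤ (∫⁻ t in Ioo 0 1, ENNReal.ofReal (Φ t / t ^ 2)) +
          ∫⁻ _ in Icc 1 A, ENNReal.ofReal (Φ A) :=
        add_le_add_right (setLIntegral_mono' measurableSet_Icc hbound) _
    _ < ⊤ := by
        rw [setLIntegral_const]
        exact ENNReal.add_lt_top.2
          ⟨hint, ENNReal.mul_lt_top ENNReal.ofReal_lt_top measure_Icc_lt_top⟩

theorem lintegral_comp_mul_exp_lt_top_of_le_exp_neg {X : Type*} [MeasurableSpace X] {μ : Measure X}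
    [SFinite μ] {s : Set X} (hs : μ s < ⊤) {Φ : ℝ → ℝ} (hΦ : MonotoneOn Φ (Ici 0)) (hΦ0 : Φ 0 = 0)
    (hint : ∫⁻ t in Ioo (0 : ℝ) 1, ENNReal.ofReal (Φ t / t ^ 2) < ⊤) {h : X × ℝ → ℝ}
    (hnonneg : ∀ p, 0 ≤ h p) {C : ℝ} (hle : ∀ p, h p ≤ C * Real.exp (-p.2))
    (hsupp : Function.support h ⊆ s ×ˢ Ici 0) :
    ∫⁻ p, ENNReal.ofReal (Φ (h p) * Real.exp p.2) ∂μ.prod volume < ⊤ := by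
  set A := max C 1
  have hA : 0 < A := zero_lt_one.trans_le (le_max_right C 1)
  have hsupp' : (Function.support fun p => ENNReal.ofReal (Φ (h p) * Real.exp p.2)) ⊆
      s ×ˢ Ici 0 := fun p hp => hsupp fun hp0 => hp (by simp [hp0, hΦ0])
  have hmono : ∀ p, Φ (h p) ≤ Φ (A * Real.exp (-p.2)) := fun p => by
    have hpA : h p ≤ A * Real.exp (-p.2) := (hle p).trans (by gcongr; exact le_max_left C 1)
    exact hΦ (hnonneg p) ((hnonneg p).trans hpA) hpA
  calc ∫⁻ p, ENNReal.ofReal (Φ (h p) * Real.exp p.2) ∂μ.prod volume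
      = ∫⁻ p, ENNReal.ofReal (Φ (h p) * Real.exp p.2)
          ∂(μ.restrict s).prod (volume.restrict (Ici 0)) := by
        rw [Measure.prod_restrict, setLIntegral_eq_of_support_subset hsupp']
    _ ≤ ∫⁻ p, ENNReal.ofReal (Φ (A * Real.exp (-p.2)) * Real.exp p.2)
          ∂(μ.restrict s).prod (volume.restrict (Ici 0)) := by
        gcongr with p
        exact hmono p
    _ ≤ ∫⁻ _ in s, (∫⁻ z in Ici 0, ENNReal.ofReal (Φ (A * Real.exp (-z)) * Real.exp z)) ∂μ :=
        lintegral_prod_le _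
    _ = ENNReal.ofReal A * (∫⁻ t in Ioc 0 A, ENNReal.ofReal (Φ t / t ^ 2)) * μ s := by
        rw [setLIntegral_const, setLIntegral_Ici_comp_mul_exp_neg_mul_exp Φ hA]
    _ < ⊤ := ENNReal.mul_lt_top (ENNReal.mul_lt_top ENNReal.ofReal_lt_top
        (setLIntegral_Ioc_div_sq_lt_top hΦ hint A)) hs

/-! ### Partial derivatives and the hyperbolic norm of the differential -/

lemma support_pdy_subset (f : ℝ × ℝ → ℝ) : Function.support (pdy f) ⊆ tsupport f := by
  intro p
  contrapose!
  intro hp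
  have hslice : (fun y => f (y, p.2)) =ᶠ[𝓝 p.1] fun _ => 0 :=
    (notMem_tsupport_iff_eventuallyEq.1 hp).comp_tendsto
      (Continuous.tendsto (by fun_prop : Continuous fun y : ℝ => (y, p.2)) p.1)
  simp [pdy, hslice.deriv_eq]

lemma support_pdz_subset (f : ℝ × ℝ → ℝ) : Function.support (pdz f) ⊆ tsupport f := by
  intro p
  contrapose!
  intro hp
  have hslice : (fun z => f (p.1, z)) =ᶠ[𝓝 p.2] fun _ => 0 :=
    (notMem_tsupport_iff_eventuallyEq.1 hp).comp_tendsto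
      (Continuous.tendsto (by fun_prop : Continuous fun z : ℝ => (p.1, z)) p.2)
  simp [pdz, hslice.deriv_eq]

lemma pdz_eq_fderiv {f : ℝ × ℝ → ℝ} {p : ℝ × ℝ} (hf : DifferentiableAt ℝ f p) :
    pdz f p = fderiv ℝ f p (0, 1) :=
  (hf.hasFDerivAt.comp_hasDerivAt p.2
    ((hasDerivAt_const p.2 p.1).prodMk (hasDerivAt_id p.2))).deriv

lemma continuous_pdz {f : ℝ × ℝ → ℝ} (hf : ContDiff ℝ 1 f) : Continuous (pdz f) := by
  have hpdz : pdz f = fun p => fderiv ℝ f p (0, 1) :=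
    funext fun p => pdz_eq_fderiv (hf.differentiable one_ne_zero p)
  rw [hpdz]
  exact (hf.continuous_fderiv one_ne_zero).clm_apply continuous_const

/-- The pointwise norm `|df|` of the differential of `f` in the metric `e^{2z} dy² + dz²`. -/
noncomputable def hypDiffNorm (f : ℝ × ℝ → ℝ) (p : ℝ × ℝ) : ℝ :=
  Real.sqrt (Real.exp (-2 * p.2) * (pdy f p) ^ 2 + (pdz f p) ^ 2)

lemma hypDiffNorm_le (f : ℝ × ℝ → ℝ) (p : ℝ × ℝ) :
    hypDiffNorm f p ≤ |pdy f p| * Real.exp (-p.2) + |pdz f p| := by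
  have hsq : Real.exp (-2 * p.2) * (pdy f p) ^ 2 = (|pdy f p| * Real.exp (-p.2)) ^ 2 := by
    rw [mul_pow, sq_abs, ← Real.exp_nat_mul]
    push_cast
    ring_nf
  rw [hypDiffNorm, hsq, ← sq_abs (pdz f p)]
  refine Real.sqrt_le_iff.2 ⟨by positivity, ?_⟩
  rw [add_sq]
  exact add_le_add_left (le_add_of_nonneg_right (by positivity)) _

lemma support_hypDiffNorm_subset (f : ℝ × ℝ → ℝ) :
    Function.support (hypDiffNorm f) ⊆ tsupport f := by
  intro p hp
  by_contra hpf
  have hy : pdy f p = 0 := Function.notMem_support.1 fun h => hpf (support_pdy_subset f h)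
  have hz : pdz f p = 0 := Function.notMem_support.1 fun h => hpf (support_pdz_subset f h)
  exact hp (by simp [hypDiffNorm, hy, hz])

lemma exists_hypDiffNorm_le_mul_exp_neg {f : ℝ × ℝ → ℝ} (hf : ContDiff ℝ 1 f)
    (hbdd : ∃ M, ∀ p, |pdy f p| ≤ M) (hcomp : HasCompactSupport (pdz f)) :
    ∃ C, ∀ p, hypDiffNorm f p ≤ C * Real.exp (-p.2) := by
  obtain ⟨M, hM⟩ := hbdd
  obtain ⟨N, hN⟩ := (hcomp.mul_right (f' := fun p => Real.exp p.2)).exists_bound_of_continuous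
    ((continuous_pdz hf).mul (by fun_prop))
  have hpdz : ∀ p, |pdz f p| ≤ N * Real.exp (-p.2) := fun p => by
    rw [Real.exp_neg, ← div_eq_mul_inv, le_div_iff₀ (Real.exp_pos _)]
    simpa [abs_mul] using hN p
  refine ⟨M + N, fun p => (hypDiffNorm_le f p).trans ?_⟩
  rw [add_mul]
  gcongr
  exacts [hM p, hpdz p]

theorem lintegral_orlicz_hypDiffNorm_lt_top {f : ℝ × ℝ → ℝ} (hf : ContDiff ℝ 1 f)
    (hbdd : ∃ M, ∀ p, |pdy f p| ≤ M) (hcomp : HasCompactSupport (pdz f)) {s : Set ℝ}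
    (hs : volume s < ⊤) (hsupp : tsupport f ⊆ s ×ˢ Ici 0) {Φ : ℝ → ℝ}
    (hΦ : MonotoneOn Φ (Ici 0)) (hΦ0 : Φ 0 = 0)
    (hint : ∫⁻ t in Ioo (0 : ℝ) 1, ENNReal.ofReal (Φ t / t ^ 2) < ⊤) {a : ℝ} (ha : 0 ≤ a) :
    ∫⁻ p, ENNReal.ofReal (Φ (a * hypDiffNorm f p) * Real.exp p.2) < ⊤ := by
  obtain ⟨C, hC⟩ := exists_hypDiffNorm_le_mul_exp_neg hf hbdd hcomp
  refine lintegral_comp_mul_exp_lt_top_of_le_exp_neg hs hΦ hΦ0 hint (C := a * C)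
    (fun p => mul_nonneg ha (Real.sqrt_nonneg _)) (fun p => ?_) ?_
  · rw [mul_assoc]
    exact mul_le_mul_of_nonneg_left (hC p) ha
  · exact (Function.support_mul_subset_right _ _).trans
      ((support_hypDiffNorm_subset f).trans hsupp)

/-- The coefficient `J` of `df ∧ dg = J dy ∧ dz`. -/
noncomputable def wedgeCoeff (f g : ℝ × ℝ → ℝ) (p : ℝ × ℝ) : ℝ :=
  pdy f p * pdz g p - pdz f p * pdy g p

/-! ### Products of one-variable functions -/

/-- The function `(y, z) ↦ u(y) v(z)`, the tensor product `u ⊗ v`. -/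
def tensorFun (u v : ℝ → ℝ) (p : ℝ × ℝ) : ℝ := u p.1 * v p.2

section tensorFun

variable {u v w : ℝ → ℝ}

lemma contDiff_tensorFun {n : WithTop ℕ∞} (hu : ContDiff ℝ n u) (hv : ContDiff ℝ n v) :
    ContDiff ℝ n (tensorFun u v) :=
  (hu.comp contDiff_fst).mul (hv.comp contDiff_snd)

lemma pdy_tensorFun (u v : ℝ → ℝ) : pdy (tensorFun u v) = tensorFun (deriv u) v := by
  ext p
  simp [pdy, tensorFun]

lemma pdz_tensorFun (u v : ℝ → ℝ) : pdz (tensorFun u v) = tensorFun u (deriv v) := by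
  ext p
  simp [pdz, tensorFun]

lemma hasCompactSupport_tensorFun (hu : HasCompactSupport u) (hv : HasCompactSupport v) :
    HasCompactSupport (tensorFun u v) := by
  refine HasCompactSupport.intro (hu.isCompact.prod hv.isCompact) fun p hp => ?_
  rcases not_and_or.1 hp with h | h
  · simp [tensorFun, image_eq_zero_of_notMem_tsupport h]
  · simp [tensorFun, image_eq_zero_of_notMem_tsupport h]

lemma wedgeCoeff_tensorFun_mul (hw : Differentiable ℝ w) (hu : Differentiable ℝ u) (v : ℝ → ℝ) :
    wedgeCoeff (tensorFun (w * u) v) (tensorFun u v) =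
      tensorFun (deriv w * u ^ 2) (v * deriv v) := by
  ext p
  simp only [wedgeCoeff, pdy_tensorFun, pdz_tensorFun, tensorFun, deriv_mul (hw p.1) (hu p.1),
    Pi.mul_apply, Pi.pow_apply]
  ring

end tensorFun

/-! ### The bump and the step -/

lemma exists_contDiff_support_eq_integral_sq_eq {E : Type*} [NormedAddCommGroup E]
    [NormedSpace ℝ E] [FiniteDimensional ℝ E] [MeasurableSpace E] [OpensMeasurableSpace E]
    (μ : Measure E) [IsFiniteMeasureOnCompacts μ] [μ.IsOpenPosMeasure] {s : Set E}
    (hs : IsOpen s) (hbdd : Bornology.IsBounded s) (hne : s.Nonempty) {c : ℝ} (hc : 0 < c) :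
    ∃ u : E → ℝ, Function.support u = s ∧ ContDiff ℝ (⊤ : ℕ∞) u ∧ (∀ x, 0 ≤ u x) ∧
      ∫ x, u x ^ 2 ∂μ = c := by
  obtain ⟨u, hsupp, hu, hrange⟩ := hs.exists_contDiff_support_eq (n := ⊤)
  obtain ⟨x, hx⟩ := hne
  have hcomp : HasCompactSupport u := by
    rw [HasCompactSupport, tsupport, hsupp]
    exact hbdd.isCompact_closure
  have hpos : 0 < ∫ x, u x ^ 2 ∂μ :=
    (hu.continuous.pow 2).integral_pos_of_hasCompactSupport_nonneg_nonzero (x := x)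
      (hcomp.comp_left (g := fun t : ℝ => t ^ 2) (zero_pow two_ne_zero)) (fun _ => sq_nonneg _)
      (pow_ne_zero 2 (Function.mem_support.1 (hsupp.superset hx)))
  obtain ⟨k, hk, hkc⟩ : ∃ k : ℝ, 0 < k ∧ k ^ 2 * ∫ x, u x ^ 2 ∂μ = c :=
    ⟨√(c / ∫ x, u x ^ 2 ∂μ), Real.sqrt_pos.2 (div_pos hc hpos), by
      rw [Real.sq_sqrt (div_pos hc hpos).le, div_mul_cancel₀ _ hpos.ne']⟩
  refine ⟨fun x => k * u x, ?_, contDiff_const.mul hu,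
    fun x => mul_nonneg hk.le (hrange (mem_range_self x)).1, ?_⟩
  · rw [← hsupp]
    ext x
    simp [hk.ne']
  · simp_rw [mul_pow]
    rw [integral_const_mul, hkc]

lemma integral_mul_deriv_self {v : ℝ → ℝ} {a b : ℝ} (hv : Differentiable ℝ v)
    (hint : Integrable (v * deriv v)) (hbot : Tendsto v atBot (𝓝 a))
    (htop : Tendsto v atTop (𝓝 b)) :
    ∫ z, v z * deriv v z = (b ^ 2 - a ^ 2) / 2 := by
  have hderiv : ∀ z, HasDerivAt (fun z => v z ^ 2 / 2) (v z * deriv v z) z := fun z =>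
    (((hv z).hasDerivAt.fun_pow 2).div_const 2).congr_deriv (by push_cast; ring)
  rw [integral_of_hasDerivAt_of_tendsto hderiv hint ((hbot.pow 2).div_const 2)
    ((htop.pow 2).div_const 2), sub_div]

lemma support_deriv_smoothTransition_subset :
    Function.support (deriv Real.smoothTransition) ⊆ Icc 0 1 := by
  intro z hz
  by_contra hzI
  rcases not_and_or.1 hzI with h | h
  · have hloc : Real.smoothTransition =ᶠ[𝓝 z] fun _ => 0 := by
      filter_upwards [Iio_mem_nhds (not_le.1 h)] with x hx
      exact Real.smoothTransition.zero_of_nonpos (le_of_lt hx)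
    exact hz (by simp [hloc.deriv_eq])
  · have hloc : Real.smoothTransition =ᶠ[𝓝 z] fun _ => 1 := by
      filter_upwards [Ioi_mem_nhds (not_le.1 h)] with x hx
      exact Real.smoothTransition.one_of_one_le (le_of_lt hx)
    exact hz (by simp [hloc.deriv_eq])

lemma hasCompactSupport_deriv_smoothTransition :
    HasCompactSupport (deriv Real.smoothTransition) :=
  HasCompactSupport.of_support_subset_isCompact isCompact_Icc support_deriv_smoothTransition_subset

lemma integral_smoothTransition_mul_deriv :
    ∫ z, Real.smoothTransition z * deriv Real.smoothTransition z = 1 / 2 := by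
  have hC1 : ContDiff ℝ 1 Real.smoothTransition := Real.smoothTransition.contDiff
  have hint : Integrable (Real.smoothTransition * deriv Real.smoothTransition) :=
    (hC1.continuous.mul (hC1.continuous_deriv le_rfl)).integrable_of_hasCompactSupport
      hasCompactSupport_deriv_smoothTransition.mul_left
  have hbot : Tendsto Real.smoothTransition atBot (𝓝 0) := tendsto_const_nhds.congr' <|
    (eventually_le_atBot 0).mono fun _ hz => (Real.smoothTransition.zero_of_nonpos hz).symm
  have htop : Tendsto Real.smoothTransition atTop (𝓝 1) := tendsto_const_nhds.congr' <|
    (eventually_ge_atTop 1).mono fun _ hz => (Real.smoothTransition.one_of_one_le hz).symm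
  rw [integral_mul_deriv_self (hC1.differentiable one_ne_zero) hint hbot htop]
  norm_num

/-! ### The pair -/

/-- Conditions (1)–(4), imposed on `f` and `g` separately. -/
structure IsStripFunction (f : ℝ × ℝ → ℝ) : Prop where
  contDiff : ContDiff ℝ (⊤ : ℕ∞) f
  nonneg : ∀ p, 0 ≤ f p
  eq_zero : ∀ y z : ℝ, z ≤ 0 ∨ 1 ≤ |y| → f (y, z) = 0
  bounded_pdy : ∃ M, ∀ p, |pdy f p| ≤ M
  hasCompactSupport_pdz : HasCompactSupport (pdz f)

lemma IsStripFunction.tsupport_subset {f : ℝ × ℝ → ℝ} (hf : IsStripFunction f) :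
    tsupport f ⊆ Icc (-1) 1 ×ˢ Ici 0 := by
  refine closure_minimal (fun p hp => ?_) (isClosed_Icc.prod isClosed_Ici)
  obtain ⟨hz, hy⟩ := not_or.1 (mt (hf.eq_zero p.1 p.2) hp)
  exact ⟨abs_le.1 (not_le.1 hy).le, (not_le.1 hz).le⟩

lemma IsStripFunction.lintegral_orlicz_lt_top {f : ℝ × ℝ → ℝ} (hf : IsStripFunction f)
    {Φ : ℝ → ℝ} (hΦ : MonotoneOn Φ (Ici 0)) (hΦ0 : Φ 0 = 0)
    (hint : ∫⁻ t in Ioo (0 : ℝ) 1, ENNReal.ofReal (Φ t / t ^ 2) < ⊤) {a : ℝ} (ha : 0 ≤ a) :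
    ∫⁻ p, ENNReal.ofReal (Φ (a * hypDiffNorm f p) * Real.exp p.2) < ⊤ :=
  lintegral_orlicz_hypDiffNorm_lt_top (hf.contDiff.of_le (by simp)) hf.bounded_pdy
    hf.hasCompactSupport_pdz measure_Icc_lt_top hf.tsupport_subset hΦ hΦ0 hint ha

lemma isStripFunction_tensorFun_smoothTransition {u : ℝ → ℝ} (hu : ContDiff ℝ (⊤ : ℕ∞) u)
    (hnonneg : ∀ y, 0 ≤ u y) (hsupp : Function.support u ⊆ Ioo (-1) 1) :
    IsStripFunction (tensorFun u Real.smoothTransition) where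
  contDiff := contDiff_tensorFun hu Real.smoothTransition.contDiff
  nonneg p := mul_nonneg (hnonneg p.1) (Real.smoothTransition.nonneg p.2)
  eq_zero y z := by
    rintro (hz | hy)
    · simp [tensorFun, Real.smoothTransition.zero_of_nonpos hz]
    · have huy : u y = 0 :=
        Function.notMem_support.1 fun h => hy.not_gt (abs_lt.2 (hsupp h))
      simp [tensorFun, huy]
  bounded_pdy := by
    have hcomp : HasCompactSupport u :=
      .of_support_subset_isCompact isCompact_Icc (hsupp.trans Ioo_subset_Icc_self)
    obtain ⟨M, hM⟩ := hcomp.deriv.exists_bound_of_continuous (hu.continuous_deriv (by simp))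
    refine ⟨M, fun p => ?_⟩
    rw [pdy_tensorFun, tensorFun, abs_mul, abs_of_nonneg (Real.smoothTransition.nonneg _)]
    exact (mul_le_of_le_one_right (abs_nonneg _) (Real.smoothTransition.le_one _)).trans (hM p.1)
  hasCompactSupport_pdz := by
    rw [pdz_tensorFun]
    exact hasCompactSupport_tensorFun
      (.of_support_subset_isCompact isCompact_Icc (hsupp.trans Ioo_subset_Icc_self))
      hasCompactSupport_deriv_smoothTransition

theorem exists_isStripFunction_pair :
    ∃ f g : ℝ × ℝ → ℝ, IsStripFunction f ∧ IsStripFunction g ∧ (∀ p, 0 ≤ wedgeCoeff f g p) ∧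
      Function.support (wedgeCoeff f g) ⊆ Icc (-1) 1 ×ˢ Icc 0 1 ∧
      ∫ p, wedgeCoeff f g p = 1 := by
  obtain ⟨u, hsupp, hu, hnonneg, hint⟩ := exists_contDiff_support_eq_integral_sq_eq volume
    (isOpen_Ioo (a := (-1 : ℝ)) (b := 1)) (Metric.isBounded_Ioo _ _) ⟨0, by norm_num⟩ two_pos
  set w : ℝ → ℝ := fun y => y + 2
  have hw : ContDiff ℝ (⊤ : ℕ∞) w := by fun_prop
  have hwu_nonneg : ∀ y, 0 ≤ (w * u) y := fun y => by
    by_cases hy : y ∈ Ioo (-1 : ℝ) 1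
    · exact mul_nonneg (by linarith [hy.1] : (0 : ℝ) ≤ y + 2) (hnonneg y)
    · simp [Function.notMem_support.1 (hsupp ▸ hy)]
  have hJ : wedgeCoeff (tensorFun (w * u) Real.smoothTransition)
      (tensorFun u Real.smoothTransition) =
      tensorFun (u ^ 2) (Real.smoothTransition * deriv Real.smoothTransition) := by
    rw [wedgeCoeff_tensorFun_mul (hw.differentiable (by simp)) (hu.differentiable (by simp))]
    congr 1
    ext y
    simp [w]
  refine ⟨tensorFun (w * u) Real.smoothTransition, tensorFun u Real.smoothTransition,
    isStripFunction_tensorFun_smoothTransition (hw.mul hu) hwu_nonneg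
      ((Function.support_mul_subset_right _ _).trans hsupp.subset),
    isStripFunction_tensorFun_smoothTransition hu hnonneg hsupp.subset, ?_, ?_, ?_⟩ <;> rw [hJ]
  · exact fun p => mul_nonneg (sq_nonneg _)
      (mul_nonneg (Real.smoothTransition.nonneg _) Real.smoothTransition.monotone.deriv_nonneg)
  · refine fun p hp => ⟨Ioo_subset_Icc_self (hsupp.subset ?_),
      support_deriv_smoothTransition_subset ?_⟩
    · exact ne_zero_pow two_ne_zero (left_ne_zero_of_mul hp)
    · exact right_ne_zero_of_mul (right_ne_zero_of_mul hp)
  · calc ∫ p, tensorFun (u ^ 2) (Real.smoothTransition * deriv Real.smoothTransition) p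
        = (∫ y, u y ^ 2) * ∫ z, Real.smoothTransition z * deriv Real.smoothTransition z :=
          integral_prod_mul (fun y => u y ^ 2) _
      _ = 1 := by rw [hint, integral_smoothTransition_mul_deriv]; norm_num

theorem exists_wedge_pair_hyperbolic_plane_general :
    ∃ f g : ℝ × ℝ → ℝ, ContDiff ℝ (⊤ : ℕ∞) f ∧ ContDiff ℝ (⊤ : ℕ∞) g ∧
      (∀ p : ℝ × ℝ, 0 ≤ f p ∧ 0 ≤ g p) ∧
      (∀ y z : ℝ, z ≤ 0 ∨ 1 ≤ |y| → f (y, z) = 0 ∧ g (y, z) = 0) ∧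
      (∃ M : ℝ, ∀ p : ℝ × ℝ, |pdy f p| ≤ M ∧ |pdy g p| ≤ M) ∧
      HasCompactSupport (pdz f) ∧ HasCompactSupport (pdz g) ∧
      (∀ p : ℝ × ℝ, 0 ≤ pdy f p * pdz g p - pdz f p * pdy g p) ∧
      (∀ p : ℝ × ℝ, p ∉ Set.Icc (-1 : ℝ) 1 ×ˢ Set.Icc (0 : ℝ) 1 →
        pdy f p * pdz g p - pdz f p * pdy g p = 0) ∧
      (∫ p : ℝ × ℝ, (pdy f p * pdz g p - pdz f p * pdy g p)) = 1 ∧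
      (∀ Φ : ℝ → ℝ, MonotoneOn Φ (Set.Ici 0) → Φ 0 = 0 →
        (∫⁻ v in Set.Ioo (0 : ℝ) 1, ENNReal.ofReal (Φ v / v ^ 2)) < ⊤ →
        ∀ a : ℝ, 0 ≤ a →
          (∫⁻ p : ℝ × ℝ, ENNReal.ofReal
              (Φ (a * Real.sqrt (Real.exp (-2 * p.2) * (pdy f p) ^ 2 + (pdz f p) ^ 2)) *
                Real.exp p.2)) < ⊤ ∧
          (∫⁻ p : ℝ × ℝ, ENNReal.ofReal
              (Φ (a * Real.sqrt (Real.exp (-2 * p.2) * (pdy g p) ^ 2 + (pdz g p) ^ 2)) *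
                Real.exp p.2)) < ⊤) := by
  obtain ⟨f, g, hf, hg, hJ_nonneg, hJ_supp, hJ_int⟩ := exists_isStripFunction_pair
  obtain ⟨M, hM⟩ := hf.bounded_pdy
  obtain ⟨N, hN⟩ := hg.bounded_pdy
  exact ⟨f, g, hf.contDiff, hg.contDiff, fun p => ⟨hf.nonneg p, hg.nonneg p⟩,
    fun y z hyz => ⟨hf.eq_zero y z hyz, hg.eq_zero y z hyz⟩,
    ⟨max M N, fun p => ⟨(hM p).trans (le_max_left M N), (hN p).trans (le_max_right M N)⟩⟩,
    hf.hasCompactSupport_pdz, hg.hasCompactSupport_pdz, hJ_nonneg,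
    fun p hp => Function.notMem_support.1 fun h => hp (hJ_supp h), hJ_int,
    fun Φ hΦ hΦ0 hint a ha =>
      ⟨hf.lintegral_orlicz_lt_top hΦ hΦ0 hint ha, hg.lintegral_orlicz_lt_top hΦ hΦ0 hint ha⟩⟩

/-- There exist smooth nonnegative functions `f, g` on the hyperbolic plane (modeled as `ℝ²`
with coordinates `(y, z)` and metric `ds² = e^{2z}dy² + dz²`) vanishing for `z ≤ 0` or
`|y| ≥ 1`, with bounded `y`-derivatives, compactly supported `z`-derivatives, with
`df ∧ dg = J dy ∧ dz` nonnegative, supported in `[-1,1] × [0,1]`, of total integral `1`,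
and such that `df, dg ∈ L^Φ(ℍ²)` for every N-function `Φ` satisfying condition (A). -/
theorem exists_wedge_pair_hyperbolic_plane :
    ∃ f g : ℝ × ℝ → ℝ, ContDiff ℝ (⊤ : ℕ∞) f ∧ ContDiff ℝ (⊤ : ℕ∞) g ∧
      (∀ p : ℝ × ℝ, 0 ≤ f p ∧ 0 ≤ g p) ∧
      (∀ y z : ℝ, z ≤ 0 ∨ 1 ≤ |y| → f (y, z) = 0 ∧ g (y, z) = 0) ∧
      (∃ M : ℝ, ∀ p : ℝ × ℝ, |pdy f p| ≤ M ∧ |pdy g p| ≤ M) ∧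
      HasCompactSupport (pdz f) ∧ HasCompactSupport (pdz g) ∧
      (∀ p : ℝ × ℝ, 0 ≤ pdy f p * pdz g p - pdz f p * pdy g p) ∧
      (∀ p : ℝ × ℝ, p ∉ Set.Icc (-1 : ℝ) 1 ×ˢ Set.Icc (0 : ℝ) 1 →
        pdy f p * pdz g p - pdz f p * pdy g p = 0) ∧
      (∫ p : ℝ × ℝ, (pdy f p * pdz g p - pdz f p * pdy g p)) = 1 ∧
      (∀ Φ : ℝ → ℝ, IsNFunction Φ →
        (∫⁻ v in Set.Ioo (0 : ℝ) 1, ENNReal.ofReal (Φ v / v ^ 2)) < ⊤ →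
        ∀ a : ℝ, 0 < a →
          (∫⁻ p : ℝ × ℝ, ENNReal.ofReal
              (Φ (a * Real.sqrt (Real.exp (-2 * p.2) * (pdy f p) ^ 2 + (pdz f p) ^ 2)) *
                Real.exp p.2)) < ⊤ ∧
          (∫⁻ p : ℝ × ℝ, ENNReal.ofReal
              (Φ (a * Real.sqrt (Real.exp (-2 * p.2) * (pdy g p) ^ 2 + (pdz g p) ^ 2)) *
                Real.exp p.2)) < ⊤) := by
  obtain ⟨f, g, hf, hg, hfg, hzero, hbdd, hpf, hpg, hJ, hJ0, hJ1, horlicz⟩ :=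
    exists_wedge_pair_hyperbolic_plane_general
  exact ⟨f, g, hf, hg, hfg, hzero, hbdd, hpf, hpg, hJ, hJ0, hJ1, fun Φ hΦ hA a ha =>
    horlicz Φ hΦ.monotoneOn ((hΦ.zero_iff 0).2 rfl) hA a ha.le⟩
end
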